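/- arXiv:2601.05883 — 11 statements merged into one kernel-verified Lean document; each statement's English description precedes it below -/
import Mathlib

section
/- There exist absolute constants c₁, c₂ ∈ (0,1), C₁, C₂ > 0 and a natural number N₀ such that the following holds. For every natural number n ≥ N₀, all reals ε ∈ (0, 1/10] and φ ∈ (0,1] satisfying (ε/φ²)·log(1/ε) ≤ c₁ and log(1/ε)·log(φ²/ε) ≤ c₂·log n, and every integer t ≥ 20·(log n)/φ², there exists a real polynomial q with deg q ≤ C₁·(ε·t + log(φ²/ε)) such that the polynomial p(X) := X^t · q(X) satisfies: (i) every coefficient of p (in the standard monomial basis) has absolute value at most (1/ε)^{C₂·(ε·t + log(φ²/ε))}; (ii) |p(x) − 1| ≤ ε/φ² for every real x ∈ [1−ε, 1]; and (iii) |p(x)| ≤ n^{−4} for every real x ∈ [0, 1 − φ²/4]. -/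
open Polynomial

/-- Lower partial sums of the negative binomial series. -/
lemma aux_low (m d : ℕ) (r v : ℝ) (hr : 0 < r) (hrv : r ≤ v) (hr1 : r < 1) :
    ∑ k ∈ Finset.range (d + 1), ((k + m).choose m : ℝ) * v ^ k
      ≤ (v / r) ^ d * (1 / (1 - r) ^ (m + 1)) := by
  have hs := hasSum_choose_mul_geometric_of_norm_lt_one (𝕜 := ℝ) m (r := r)
    (by rw [Real.norm_eq_abs, abs_of_pos hr]; exact hr1)
  have h1 : ∑ k ∈ Finset.range (d + 1), ((k + m).choose m : ℝ) * r ^ k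
      ≤ 1 / (1 - r) ^ (m + 1) :=
    sum_le_hasSum _ (fun i _ => by positivity) hs
  have hvr : 1 ≤ v / r := by rwa [le_div_iff₀ hr, one_mul]
  calc _ ≤ ∑ k ∈ Finset.range (d + 1), (v / r) ^ d * (((k + m).choose m : ℝ) * r ^ k) := by
        apply Finset.sum_le_sum
        intro k hk
        have hk' : k ≤ d := by simp at hk; omega
        have : v ^ k = (v / r) ^ k * r ^ k := by
          rw [← mul_pow, div_mul_cancel₀ _ hr.ne']
        rw [this]
        have h2 : (v / r) ^ k ≤ (v / r) ^ d := pow_le_pow_right₀ hvr hk'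
        have h3 : (0:ℝ) ≤ ((k + m).choose m : ℝ) * r ^ k := by positivity
        nlinarith [mul_le_mul_of_nonneg_right h2 h3]
    _ = (v / r) ^ d * ∑ k ∈ Finset.range (d + 1), (((k + m).choose m : ℝ) * r ^ k) := by
        rw [Finset.mul_sum]
    _ ≤ _ := by
        apply mul_le_mul_of_nonneg_left h1
        positivity

/-- Upper tail of the negative binomial series. -/
lemma aux_high (m d : ℕ) (u s : ℝ) (hu : 0 ≤ u) (hs1 : 1 ≤ s) (hsu : s * u < 1) :
    1 / (1 - u) ^ (m + 1) - ∑ k ∈ Finset.range (d + 1), ((k + m).choose m : ℝ) * u ^ k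
      ≤ (s ^ (d + 1))⁻¹ * (1 / (1 - s * u) ^ (m + 1)) := by
  have hspos : 0 < s := by linarith
  have hu1 : u < 1 := by nlinarith
  have h1 := hasSum_choose_mul_geometric_of_norm_lt_one (𝕜 := ℝ) m (r := u)
    (by rw [Real.norm_eq_abs, abs_of_nonneg hu]; exact hu1)
  have h2 := (hasSum_choose_mul_geometric_of_norm_lt_one (𝕜 := ℝ) m (r := s * u)
    (by rw [Real.norm_eq_abs, abs_of_nonneg (by positivity)]; exact hsu)).mul_left
      ((s ^ (d + 1))⁻¹)
  have h3 : HasSum (fun k => if k ∈ Finset.range (d + 1) then ((k + m).choose m : ℝ) * u ^ k else 0)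
      (∑ k ∈ Finset.range (d + 1),
        if k ∈ Finset.range (d + 1) then ((k + m).choose m : ℝ) * u ^ k else 0) :=
    hasSum_sum_of_ne_finset_zero (fun b hb => if_neg hb)
  have h4 : (∑ k ∈ Finset.range (d + 1),
        if k ∈ Finset.range (d + 1) then ((k + m).choose m : ℝ) * u ^ k else 0)
      = ∑ k ∈ Finset.range (d + 1), ((k + m).choose m : ℝ) * u ^ k :=
    Finset.sum_congr rfl (fun k hk => if_pos hk)
  rw [h4] at h3
  refine hasSum_le ?_ (h1.sub h3) h2
  intro k
  by_cases hk : k ∈ Finset.range (d + 1)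
  · simp only [hk, if_true, sub_self]; positivity
  · simp only [hk, if_false, sub_zero]
    have hk' : d + 1 ≤ k := by simpa using hk
    have h5 : s ^ (d + 1) ≤ s ^ k := pow_le_pow_right₀ hs1 hk'
    have h6 : 1 ≤ (s ^ (d + 1))⁻¹ * s ^ k := by
      rw [inv_mul_eq_div, one_le_div (by positivity)]; exact h5
    have h7 : (0:ℝ) ≤ ((k + m).choose m : ℝ) * u ^ k := by positivity
    rw [mul_pow]
    nlinarith [mul_le_mul_of_nonneg_right h6 h7]

/-- Partial sums are bounded by the full series. -/
lemma aux_le (m d : ℕ) (u : ℝ) (hu : 0 ≤ u) (hu1 : u < 1) :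
    ∑ k ∈ Finset.range (d + 1), ((k + m).choose m : ℝ) * u ^ k ≤ 1 / (1 - u) ^ (m + 1) :=
  sum_le_hasSum _ (fun i _ => by positivity)
    (hasSum_choose_mul_geometric_of_norm_lt_one (𝕜 := ℝ) m (r := u)
    (by rw [Real.norm_eq_abs, abs_of_nonneg hu]; exact hu1))

lemma aux_exp (y b : ℝ) (hy1 : y < 1) (hb : y / (1 - y) ≤ b) (t : ℕ) :
    1 / (1 - y) ^ t ≤ Real.exp (b * t) := by
  have h0 : 0 < 1 - y := by linarith
  have h1 : 1 / (1 - y) ≤ Real.exp b := by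
    have : 1 / (1 - y) = y / (1 - y) + 1 := by field_simp; ring
    rw [this]
    exact (Real.add_one_le_exp _).trans (Real.exp_le_exp.2 hb)
  rw [mul_comm, Real.exp_nat_mul, ← one_div_pow]
  exact pow_le_pow_left₀ (by positivity) h1 t

/-- The truncated Taylor polynomial of `x ↦ x⁻¹ ^ (m+1)` at `1`. -/
noncomputable def auxQ (m d : ℕ) : Polynomial ℝ :=
  ∑ k ∈ Finset.range (d + 1), C ((k + m).choose m : ℝ) * (1 - X) ^ k

lemma auxQ_eval (m d : ℕ) (x : ℝ) :
    (auxQ m d).eval x = ∑ k ∈ Finset.range (d + 1), ((k + m).choose m : ℝ) * (1 - x) ^ k := by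
  simp [auxQ, eval_finsetSum]

lemma aux_deg (k : ℕ) : ((1 - X : ℝ[X]) ^ k).natDegree ≤ k := by
  have h : (1 - X : ℝ[X]).natDegree ≤ 1 := by
    compute_degree
  calc _ ≤ k * (1 - X : ℝ[X]).natDegree := natDegree_pow_le
    _ ≤ k * 1 := Nat.mul_le_mul_left _ h
    _ = k := mul_one k

lemma auxQ_deg (m d : ℕ) : (auxQ m d).natDegree ≤ d := by
  apply natDegree_sum_le_of_forall_le
  intro k hk
  have hk' : k ≤ d := by simp at hk; omega
  exact (natDegree_C_mul_le _ _).trans ((aux_deg k).trans hk')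

lemma aux_coeff (k : ℕ) : ∀ j, |((1 - X : ℝ[X]) ^ k).coeff j| ≤ 2 ^ k := by
  induction k with
  | zero =>
    intro j
    rw [pow_zero, coeff_one]; split_ifs <;> simp
  | succ k ih =>
    intro j
    rw [pow_succ, mul_sub, mul_one, coeff_sub]
    have h1 : |((1 - X : ℝ[X]) ^ k * X).coeff j| ≤ 2 ^ k := by
      cases j with
      | zero => simp
      | succ j => rw [coeff_mul_X]; exact ih j
    have := abs_sub (((1 - X : ℝ[X]) ^ k).coeff j) (((1 - X : ℝ[X]) ^ k * X).coeff j)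
    have h2 := ih j
    rw [pow_succ]
    linarith

lemma auxQ_coeff (m d j : ℕ) : |(auxQ m d).coeff j| ≤
    ∑ k ∈ Finset.range (d + 1), ((k + m).choose m : ℝ) * 2 ^ k := by
  rw [auxQ, finsetSum_coeff]
  refine (Finset.abs_sum_le_sum_abs _ _).trans (Finset.sum_le_sum ?_)
  intro k _
  rw [coeff_C_mul, abs_mul, abs_of_nonneg (by positivity)]
  exact mul_le_mul_of_nonneg_left (aux_coeff k j) (by positivity)

set_option maxHeartbeats 2000000 in
/-- Existence of a polynomial `p = X^t * q` with small coefficients that is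
close to `1` on `[1-ε, 1]` and close to `0` on `[0, 1-φ²/4]`. -/
theorem stmt_0 :
    ∃ c₁ ∈ Set.Ioo (0:ℝ) 1, ∃ c₂ ∈ Set.Ioo (0:ℝ) 1,
    ∃ C₁ : ℝ, 0 < C₁ ∧ ∃ C₂ : ℝ, 0 < C₂ ∧ ∃ N₀ : ℕ,
    ∀ n : ℕ, N₀ ≤ n →
    ∀ ε φ : ℝ, ε ∈ Set.Ioc (0:ℝ) (1/10) → φ ∈ Set.Ioc (0:ℝ) 1 →
    ε / φ ^ 2 * Real.log (1/ε) ≤ c₁ →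
    Real.log (1/ε) * Real.log (φ ^ 2 / ε) ≤ c₂ * Real.log n →
    ∀ t : ℕ, 20 * Real.log n / φ ^ 2 ≤ (t : ℝ) →
    ∃ q : Polynomial ℝ,
      (q.natDegree : ℝ) ≤ C₁ * (ε * t + Real.log (φ ^ 2 / ε)) ∧
      (∀ i : ℕ, |(X ^ t * q).coeff i| ≤ (1/ε) ^ (C₂ * (ε * t + Real.log (φ ^ 2 / ε)))) ∧
      (∀ x ∈ Set.Icc (1 - ε) 1, |(X ^ t * q).eval x - 1| ≤ ε / φ ^ 2) ∧
      (∀ x ∈ Set.Icc (0:ℝ) (1 - φ ^ 2 / 4), |(X ^ t * q).eval x| ≤ (n : ℝ) ^ (-(4:ℝ))) := by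
  refine ⟨1/1000, by norm_num, 1/1000, by norm_num, 4, by norm_num, 10, by norm_num, 2, ?_⟩
  intro n hn ε φ ⟨hε, hε1⟩ ⟨hφ, hφ1⟩ hc1 hc2 t ht
  set L := Real.log (φ ^ 2 / ε) with hL
  set ell := Real.log (1 / ε) with hell
  have hφ2 : 0 < φ ^ 2 := by positivity
  have hell2 : 2 ≤ ell := by
    rw [hell, Real.le_log_iff_exp_le (by positivity)]
    have h1 : Real.exp 2 = Real.exp 1 * Real.exp 1 := by rw [← Real.exp_add]; norm_num
    have h2 := Real.exp_one_lt_d9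
    have h3 := Real.exp_pos 1
    have h4 : (10:ℝ) ≤ 1 / ε := by rw [le_div_iff₀ hε]; linarith
    rw [h1]; nlinarith
  have hδpos : 0 < ε / φ ^ 2 := by positivity
  have hδ : ε / φ ^ 2 ≤ 1 / 2000 := by nlinarith
  have hεφ : ε ≤ φ ^ 2 / 2000 := by
    rw [div_le_iff₀ hφ2] at hδ; linarith
  have hLpos : 0 ≤ L := by
    apply Real.log_nonneg
    rw [le_div_iff₀ hε]; linarith
  have hlogn : 0 < Real.log n := Real.log_pos (by exact_mod_cast hn)
  have hLn : L ≤ Real.log n / 2000 := by nlinarith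
  have ht' : 20 * Real.log n ≤ φ ^ 2 * t := by
    rw [div_le_iff₀ hφ2] at ht; linarith
  have htpos : 0 < t := by
    rcases Nat.eq_zero_or_pos t with h | h
    · subst h; simp at ht'; linarith
    · exact h
  obtain ⟨m, rfl⟩ : ∃ m, t = m + 1 := ⟨t - 1, by omega⟩
  set T : ℝ := ((m + 1 : ℕ) : ℝ) with hT
  have hTpos : 0 < T := by rw [hT]; exact_mod_cast htpos
  have hεT : 0 < ε * T := by positivity
  set d := ⌊4 * (ε * T + L)⌋₊ with hd
  have hd1 : (d : ℝ) ≤ 4 * (ε * T + L) := Nat.floor_le (by positivity)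
  have hd2 : 4 * (ε * T + L) < d + 1 := Nat.lt_floor_add_one _
  refine ⟨auxQ m d, ?_, ?_, ?_, ?_⟩
  · exact le_trans (by exact_mod_cast auxQ_deg m d) hd1
  · intro i
    have hq : |(X ^ (m + 1) * auxQ m d).coeff i| ≤
        ∑ k ∈ Finset.range (d + 1), ((k + m).choose m : ℝ) * 2 ^ k := by
      rw [coeff_X_pow_mul']
      split_ifs
      · exact auxQ_coeff m d _
      · rw [abs_zero]; positivity
    refine hq.trans ((aux_low m d ε 2 hε (by linarith) (by linarith)).trans ?_)
    have h1 : 1 / (1 - ε) ^ (m + 1) ≤ Real.exp (2 * ε * T) := by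
      apply aux_exp _ _ (by linarith)
      rw [div_le_iff₀ (by linarith)]; nlinarith
    have h2 : (2 / ε) ^ d ≤ Real.exp (2 * ell * d) := by
      have : 2 / ε ≤ Real.exp (2 * ell) := by
        have e1 : Real.exp (2 * ell) = (1 / ε) * (1 / ε) := by
          rw [two_mul, Real.exp_add, hell, Real.exp_log (by positivity)]
        rw [e1, show 2 / ε = 2 * (1 / ε) by ring]
        apply mul_le_mul_of_nonneg_right _ (by positivity)
        rw [le_div_iff₀ hε]; linarith
      calc _ ≤ (Real.exp (2 * ell)) ^ d := pow_le_pow_left₀ (by positivity) this d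
        _ = _ := by rw [← Real.exp_nat_mul]; ring_nf
    have h3 : (2 / ε) ^ d * (1 / (1 - ε) ^ (m + 1)) ≤
        Real.exp (2 * ell * d) * Real.exp (2 * ε * T) := by
      apply mul_le_mul h2 h1 _ (Real.exp_pos _).le
      have : 0 < 1 - ε := by linarith
      positivity
    refine h3.trans ?_
    rw [← Real.exp_add, Real.rpow_def_of_pos (by positivity)]
    apply Real.exp_le_exp.2
    have h4 : ell * d ≤ ell * (4 * (ε * T + L)) := mul_le_mul_of_nonneg_left hd1 (by linarith)
    have h5 : ε * T * 2 ≤ ε * T * ell := mul_le_mul_of_nonneg_left hell2 hεT.le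
    have h6 : 0 ≤ ell * L := by positivity
    nlinarith
  · rintro x ⟨hx1, hx2⟩
    rw [eval_mul, eval_pow, eval_X, auxQ_eval]
    have he := Real.exp_one_lt_d9
    have hepos := Real.exp_pos 1
    have he1 : 1 ≤ Real.exp 1 := Real.one_le_exp (by norm_num)
    obtain ⟨u, rfl⟩ : ∃ u, x = 1 - u := ⟨1 - x, by ring⟩
    have hu0 : 0 ≤ u := by linarith
    have huε : u ≤ ε := by linarith
    have heu : Real.exp 1 * u ≤ 0.28 := by nlinarith
    have hpu : 0 < (1 - u) ^ (m + 1) := by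
      have : 0 < 1 - u := by linarith
      positivity
    have hp1 : (1 - u) ^ (m + 1) ≤ 1 := pow_le_one₀ (by linarith) (by linarith)
    rw [show 1 - (1 - u) = u by ring]
    have hA := aux_le m d u hu0 (by linarith)
    have hB := aux_high m d u (Real.exp 1) hu0 he1 (by linarith)
    set S := ∑ k ∈ Finset.range (d + 1), ((k + m).choose m : ℝ) * u ^ k
    have h1 : 1 / (1 - Real.exp 1 * u) ^ (m + 1) ≤ Real.exp (4 * ε * T) := by
      apply aux_exp _ _ (by linarith)
      rw [div_le_iff₀ (by linarith)]
      nlinarith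
    have h2 : (Real.exp 1 ^ (d + 1))⁻¹ * (1 / (1 - Real.exp 1 * u) ^ (m + 1)) ≤ ε / φ ^ 2 := by
      have e1 : (Real.exp 1 ^ (d + 1))⁻¹ = Real.exp (-(d + 1)) := by
        rw [← Real.exp_nat_mul, Real.exp_neg]; push_cast; ring_nf
      have e2 : ε / φ ^ 2 = Real.exp (-L) := by
        rw [Real.exp_neg, hL, Real.exp_log (by positivity), inv_div]
      rw [e1, e2]
      refine (mul_le_mul_of_nonneg_left h1 (Real.exp_pos _).le).trans ?_
      rw [← Real.exp_add]
      apply Real.exp_le_exp.2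
      nlinarith
    have h3 : (1 - u) ^ (m + 1) * (1 / (1 - u) ^ (m + 1)) = 1 := by
      field_simp
    have h4 := mul_le_mul_of_nonneg_left hA hpu.le
    have h5 := mul_le_mul_of_nonneg_left (hB.trans h2) hpu.le
    have h6 := mul_le_mul_of_nonneg_right hp1 hδpos.le
    rw [mul_sub] at h5
    rw [abs_le]
    constructor <;> linarith
  · rintro x ⟨hx1, hx2⟩
    rw [eval_mul, eval_pow, eval_X, auxQ_eval]
    obtain ⟨u, rfl⟩ : ∃ u, x = 1 - u := ⟨1 - x, by ring⟩
    rw [show 1 - (1 - u) = u by ring]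
    have hu0 : φ ^ 2 / 4 ≤ u := by linarith
    have hupos : 0 < u := by linarith
    have hu1 : u ≤ 1 := by linarith
    rw [abs_of_nonneg (by positivity)]
    have hA := aux_low m d (u / 10) u (by linarith) (by linarith) (by linarith)
    have h10 : u / (u / 10) = 10 := by field_simp
    rw [h10] at hA
    have h1 : (10:ℝ) ^ d ≤ Real.exp (3 * d) := by
      rw [mul_comm, Real.exp_nat_mul]
      apply pow_le_pow_left₀ (by norm_num)
      have e1 : Real.exp 3 = Real.exp 1 * Real.exp 1 * Real.exp 1 := by
        rw [← Real.exp_add, ← Real.exp_add]; norm_num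
      have := Real.exp_one_gt_d9
      rw [e1]
      have h2 : (2.7:ℝ) * 2.7 ≤ Real.exp 1 * Real.exp 1 := by nlinarith
      nlinarith
    have h2 : (1 - u) ^ (m + 1) * (1 / (1 - u / 10) ^ (m + 1)) ≤ Real.exp (-(0.9 * u) * T) := by
      rw [mul_one_div, ← div_pow, mul_comm (-(0.9 * u)), hT, Real.exp_nat_mul]
      have h0 : 0 < 1 - u / 10 := by linarith
      apply pow_le_pow_left₀ (by positivity)
      have : (1 - u) / (1 - u / 10) ≤ -(0.9 * u) + 1 := by
        rw [div_le_iff₀ h0]; nlinarith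
      exact this.trans (Real.add_one_le_exp _)
    have hn0 : (0:ℝ) < n := by
      have : 0 < n := by omega
      exact_mod_cast this
    calc _ ≤ (1 - u) ^ (m + 1) * (10 ^ d * (1 / (1 - u / 10) ^ (m + 1))) :=
          mul_le_mul_of_nonneg_left hA (by positivity)
      _ = 10 ^ d * ((1 - u) ^ (m + 1) * (1 / (1 - u / 10) ^ (m + 1))) := by ring
      _ ≤ Real.exp (3 * d) * Real.exp (-(0.9 * u) * T) := by
          apply mul_le_mul h1 h2 _ (Real.exp_pos _).le
          have : 0 < 1 - u / 10 := by linarith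
          positivity
      _ ≤ _ := by
          rw [← Real.exp_add, Real.rpow_def_of_pos hn0]
          apply Real.exp_le_exp.2
          have h3 : φ ^ 2 / 4 * T ≤ u * T := mul_le_mul_of_nonneg_right hu0 hTpos.le
          have h4 : ε * T ≤ φ ^ 2 / 2000 * T := mul_le_mul_of_nonneg_right hεφ hTpos.le
          nlinarith
end

section
/- There exist absolute constants C₁, C₂ > 0 such that for every integer t ≥ 2, every real ε ∈ (0, 1/10], and every integer d ≥ 10·ε·t, the truncated Chebyshev expansion P(x) := c_{0,ε,t}/2 + Σ_{v=1}^{d} c_{v,ε,t}·T_v(x) of (1 − ε·x)^{−t} satisfies: (i) max_{0 ≤ v ≤ d} c_{v,ε,t} ≤ 2^{C₁·(ε·t + 1)}; and (ii) sup_{x ∈ [−1,1]} |P(x) − (1 − ε·x)^{−t}| ≤ C₂·(d+1)·e^{−d}. -/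
/-- The Chebyshev coefficient `c_{v,ε,t}` of the expansion of `(1 - ε x)^{-t}`:
`c_{v,ε,t} = 2 ∑_{n ≥ v, n - v even} ε^n 2^{-n} C(n-1+t, n) C(n, (n-v)/2)`. -/
noncomputable def chebCoeff (ε : ℝ) (t v : ℕ) : ℝ :=
  2 * ∑' n : ℕ, if v ≤ n ∧ Even (n - v) then
      ε ^ n * (2:ℝ)⁻¹ ^ n * (Nat.choose (n - 1 + t) n) * (Nat.choose n ((n - v) / 2)) else 0

open Polynomial in
lemma pow_mul_chebT (x : ℝ) (n : ℕ) : ∀ m : ℤ, (2 * x) ^ n * (Chebyshev.T ℝ m).eval x =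
    ∑ k ∈ Finset.range (n + 1), (n.choose k : ℝ) * (Chebyshev.T ℝ (m + n - 2 * k)).eval x := by
  induction n with
  | zero => intro m; simp
  | succ n ih =>
    intro m
    have h := Finset.sum_choose_succ_mul
      (fun i _ => (Chebyshev.T ℝ (m + ((n + 1 : ℕ) : ℤ) - 2 * (i : ℤ))).eval x) n
    rw [h]
    have h1 : (2 * x) * (Chebyshev.T ℝ m).eval x =
        (Chebyshev.T ℝ (m + 1)).eval x + (Chebyshev.T ℝ (m - 1)).eval x := by
      rw [Chebyshev.T_add_one]; simp
    rw [pow_succ, mul_assoc, h1, mul_add, ih, ih]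
    congr 1
    · apply Finset.sum_congr rfl
      intro k _
      congr 3
      push_cast; ring
    · apply Finset.sum_congr rfl
      intro k _
      congr 3
      push_cast; ring

/-- multiplicity of an index -/
noncomputable def chMu (v : ℕ) : ℝ := if v = 0 then 1 else 2

lemma row_sum (w : ℕ → ℝ) (n : ℕ) :
    ∑ v ∈ Finset.range (n + 1),
      (chMu v * (if v ≤ n ∧ Even (n - v) then (n.choose ((n - v) / 2) : ℝ) else 0)) * w v
    = ∑ k ∈ Finset.range (n + 1), (n.choose k : ℝ) * w ((n : ℤ) - 2 * k).natAbs := by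
  rw [← Finset.sum_fiberwise_of_maps_to (s := Finset.range (n + 1)) (t := Finset.range (n + 1))
    (g := fun k : ℕ => ((n : ℤ) - 2 * k).natAbs)
    (f := fun k : ℕ => (n.choose k : ℝ) * w ((n : ℤ) - 2 * k).natAbs)
    (fun k hk => by simp only [Finset.mem_range] at *; omega)]
  apply Finset.sum_congr rfl
  intro v hv
  simp only [Finset.mem_range] at hv
  have h2 : ∑ k ∈ (Finset.range (n + 1)).filter (fun k : ℕ => ((n : ℤ) - 2 * k).natAbs = v),
      (n.choose k : ℝ) * w ((n : ℤ) - 2 * k).natAbs =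
      (∑ k ∈ (Finset.range (n + 1)).filter (fun k : ℕ => ((n : ℤ) - 2 * k).natAbs = v), (n.choose k : ℝ)) * w v := by
    rw [Finset.sum_mul]
    apply Finset.sum_congr rfl
    intro k hk
    rw [(Finset.mem_filter.1 hk).2]
  rw [h2]
  congr 1
  by_cases he : Even (n - v)
  · obtain ⟨j, hj⟩ := he
    rw [if_pos ⟨by omega, ⟨j, hj⟩⟩]
    have hj2 : (n - v) / 2 = j := by omega
    rw [hj2]
    by_cases h0 : v = 0
    · have : (Finset.range (n + 1)).filter (fun k : ℕ => ((n : ℤ) - 2 * k).natAbs = v) = {j} := by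
        ext k; simp only [Finset.mem_filter, Finset.mem_range, Finset.mem_singleton]; omega
      rw [this]; simp [chMu, h0]
    · have : (Finset.range (n + 1)).filter (fun k : ℕ => ((n : ℤ) - 2 * k).natAbs = v)
          = {j, n - j} := by
        ext k
        simp only [Finset.mem_filter, Finset.mem_range, Finset.mem_singleton, Finset.mem_insert]
        omega
      rw [this, Finset.sum_pair (by omega), Nat.choose_symm (by omega)]
      simp [chMu, h0]; ring
  · rw [if_neg (fun h => he h.2)]
    have : (Finset.range (n + 1)).filter (fun k : ℕ => ((n : ℤ) - 2 * k).natAbs = v) = ∅ := by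
      ext k
      simp only [Finset.mem_filter, Finset.mem_range, Finset.notMem_empty, iff_false, not_and]
      intro hk h
      apply he
      rw [Nat.even_iff]; omega
    rw [this]; simp

/-- the double family -/
noncomputable def chG (ε : ℝ) (t n v : ℕ) : ℝ :=
  chMu v * (if v ≤ n ∧ Even (n - v) then
      ε ^ n * (2:ℝ)⁻¹ ^ n * (Nat.choose (n - 1 + t) n) * (Nat.choose n ((n - v) / 2)) else 0)

lemma chMu_pos (v : ℕ) : 1 ≤ chMu v := by unfold chMu; split_ifs <;> norm_num

lemma chG_nonneg {ε : ℝ} (hε : 0 ≤ ε) (t n v : ℕ) : 0 ≤ chG ε t n v := by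
  unfold chG
  have := chMu_pos v
  apply mul_nonneg (by linarith)
  split_ifs
  · positivity
  · exact le_rfl

open Polynomial in
lemma row_hasSum (ε x : ℝ) (t n : ℕ) :
    HasSum (fun v : ℕ => chG ε t n v * (Chebyshev.T ℝ v).eval x)
      ((Nat.choose (n - 1 + t) n) * (ε * x) ^ n) := by
  have h1 := pow_mul_chebT x n 0
  have h2 := row_sum (fun v => (Chebyshev.T ℝ v).eval x) n
  simp only [Chebyshev.T_natAbs] at h2
  simp only [zero_add, Chebyshev.T_zero, eval_one, mul_one] at h1
  rw [← h1] at h2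
  have h3 : ((Nat.choose (n - 1 + t) n) * (ε * x) ^ n : ℝ) =
      ∑ v ∈ Finset.range (n + 1), chG ε t n v * (Chebyshev.T ℝ v).eval x := by
    have : ((Nat.choose (n - 1 + t) n) * (ε * x) ^ n : ℝ) =
        (Nat.choose (n - 1 + t) n) * ε ^ n * (2:ℝ)⁻¹ ^ n * (2 * x) ^ n := by
      have : ε * x = ε * 2⁻¹ * (2 * x) := by ring
      rw [this, mul_pow, mul_pow]; ring
    rw [this, ← h2, Finset.mul_sum]
    apply Finset.sum_congr rfl
    intro v _
    unfold chG
    split_ifs <;> ring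
  rw [h3]
  apply hasSum_sum_of_ne_finset_zero
  intro v hv
  simp only [Finset.mem_range] at hv
  unfold chG
  rw [if_neg (by omega)]; simp

lemma f_hasSum {u : ℝ} (hu : |u| < 1) {t : ℕ} (ht : 1 ≤ t) :
    HasSum (fun n : ℕ => (Nat.choose (n - 1 + t) n : ℝ) * u ^ n) ((1 - u) ^ (-(t:ℤ))) := by
  have h := hasSum_choose_mul_geometric_of_norm_lt_one (t - 1) (r := u) (by simpa using hu)
  convert! h using 1
  · ext n
    congr 2
    rcases Nat.eq_zero_or_pos n with rfl | hn
    · simp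
    · have : n - 1 + t = n + (t - 1) := by omega
      rw [this, Nat.choose_symm_add]
  · rw [Nat.sub_add_cancel ht]; simp

lemma T_y (v : ℕ) : (Polynomial.Chebyshev.T ℝ v).eval (17/8 : ℝ) = ((4:ℝ) ^ v + (4:ℝ)⁻¹ ^ v) / 2 := by
  induction v using Nat.strong_induction_on with
  | _ v ih =>
    match v with
    | 0 => simp
    | 1 => norm_num
    | v + 2 =>
      have h1 := ih (v + 1) (by omega)
      have h0 := ih v (by omega)
      have := Polynomial.Chebyshev.T_add_two ℝ (v : ℤ)
      push_cast at h1 h0 ⊢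
      rw [this]
      simp only [Polynomial.eval_sub, Polynomial.eval_mul, Polynomial.eval_X, h1, h0,
        Polynomial.eval_ofNat]
      rw [pow_succ, pow_succ, pow_succ, pow_succ]
      ring

open Polynomial in
lemma chG_summable_y {ε : ℝ} (h0 : 0 < ε) (h1 : ε ≤ 1/10) {t : ℕ} (ht : 1 ≤ t) :
    Summable (fun p : ℕ × ℕ => chG ε t p.1 p.2 * (Chebyshev.T ℝ p.2).eval (17/8 : ℝ)) := by
  rw [summable_prod_of_nonneg]
  · refine ⟨fun n => (row_hasSum ε _ t n).summable, ?_⟩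
    simp only [(row_hasSum ε _ t _).tsum_eq]
    exact (f_hasSum (by rw [abs_lt]; constructor <;> linarith) ht).summable
  · intro p
    have := T_y p.2
    apply mul_nonneg (chG_nonneg h0.le _ _ _)
    rw [this]; positivity

lemma tsum_chG (ε : ℝ) (t v : ℕ) : ∑' n, chG ε t n v = chMu v * (chebCoeff ε t v / 2) := by
  unfold chG chebCoeff
  rw [tsum_mul_left]; ring

open Polynomial in
lemma expansion {ε : ℝ} (h0 : 0 < ε) (h1 : ε ≤ 1/10) {t : ℕ} (ht : 1 ≤ t) {z : ℝ}
    (hz : |ε * z| < 1)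
    (hT : ∀ v : ℕ, |(Chebyshev.T ℝ v).eval z| ≤ (Chebyshev.T ℝ v).eval (17/8 : ℝ)) :
    HasSum (fun v : ℕ => chMu v * (chebCoeff ε t v / 2) * (Chebyshev.T ℝ v).eval z)
      ((1 - ε * z) ^ (-(t:ℤ))) := by
  have hs : Summable (fun p : ℕ × ℕ => chG ε t p.1 p.2 * (Chebyshev.T ℝ p.2).eval z) := by
    apply Summable.of_norm_bounded (chG_summable_y h0 h1 ht)
    intro p
    rw [norm_mul, Real.norm_eq_abs, Real.norm_eq_abs, abs_of_nonneg (chG_nonneg h0.le _ _ _)]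
    exact mul_le_mul_of_nonneg_left (hT _) (chG_nonneg h0.le _ _ _)
  obtain ⟨S, hS⟩ := hs
  have e1 : S = (1 - ε * z) ^ (-(t:ℤ)) :=
    (hS.prod_fiberwise (fun n => row_hasSum ε z t n)).unique (f_hasSum hz ht)
  subst e1
  have hS2 : HasSum (fun p : ℕ × ℕ => chG ε t p.2 p.1 * (Chebyshev.T ℝ p.1).eval z) _ :=
    (Equiv.prodComm ℕ ℕ).hasSum_iff.2 hS
  refine hS2.prod_fiberwise (fun v => ?_)
  have h3 := (hS2.summable.prod_factor v).hasSum
  simp only at h3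
  rw [tsum_mul_right, tsum_chG] at h3
  exact h3

lemma f_bound {ε : ℝ} (h0 : 0 < ε) (h1 : ε ≤ 1/10) (t : ℕ) :
    (1 - ε * (17/8)) ^ (-(t:ℤ)) ≤ Real.exp (2.7 * (ε * t)) := by
  have hp : 0 < 1 - ε * (17/8) := by linarith
  have h : (1 - ε * (17/8))⁻¹ ≤ Real.exp (2.7 * ε) := by
    have h2 := Real.add_one_le_exp (2.7 * ε)
    refine le_trans ?_ h2
    rw [inv_le_iff_one_le_mul₀ hp]
    nlinarith
  calc (1 - ε * (17/8)) ^ (-(t:ℤ)) = ((1 - ε * (17/8))⁻¹) ^ t := by simp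
    _ ≤ (Real.exp (2.7 * ε)) ^ t := pow_le_pow_left₀ (by positivity) h t
    _ = _ := by rw [← Real.exp_nat_mul]; congr 1; ring

set_option maxHeartbeats 1000000 in
/-- Bounds on the coefficients and the error of the truncated Chebyshev
expansion of `(1 - ε x)^{-t}` on `[-1, 1]`. -/
theorem stmt_1 :
    ∃ C₁ : ℝ, 0 < C₁ ∧ ∃ C₂ : ℝ, 0 < C₂ ∧
    ∀ t : ℕ, 2 ≤ t → ∀ ε : ℝ, ε ∈ Set.Ioc (0:ℝ) (1/10) →
    ∀ d : ℕ, 10 * ε * t ≤ (d : ℝ) →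
      (∀ v ≤ d, chebCoeff ε t v ≤ (2:ℝ) ^ (C₁ * (ε * t + 1))) ∧
      (∀ x ∈ Set.Icc (-1:ℝ) 1,
        |chebCoeff ε t 0 / 2
            + (∑ v ∈ Finset.Icc 1 d, chebCoeff ε t v * (Polynomial.Chebyshev.T ℝ v).eval x)
            - (1 - ε * x) ^ (-(t:ℤ))| ≤ C₂ * (d + 1) * Real.exp (-(d:ℝ))) := by
  refine ⟨5, by norm_num, 2, by norm_num, ?_⟩
  rintro t ht ε ⟨h0, h1⟩ d hd
  have ht1 : 1 ≤ t := by omega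
  have hTy1 : ∀ v : ℕ, 1 ≤ (Polynomial.Chebyshev.T ℝ v).eval (17/8 : ℝ) :=
    fun v => Polynomial.Chebyshev.one_le_eval_T_real v (by norm_num)
  have hTy4 : ∀ v : ℕ, (4:ℝ) ^ v / 2 ≤ (Polynomial.Chebyshev.T ℝ v).eval (17/8 : ℝ) := by
    intro v; rw [T_y]; have : (0:ℝ) < 4⁻¹ ^ v := by positivity
    linarith
  have hy := expansion h0 h1 ht1 (z := 17/8) (by rw [abs_lt]; constructor <;> linarith)
    (fun v => (abs_of_nonneg (by linarith [hTy1 v])).le)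
  have hf := f_bound h0 h1 t
  set F := (1 - ε * (17/8)) ^ (-(t:ℤ)) with hF
  have hc0 : ∀ v, 0 ≤ chMu v * (chebCoeff ε t v / 2) := by
    intro v; rw [← tsum_chG]; exact tsum_nonneg (fun n => chG_nonneg h0.le _ _ _)
  set e : ℕ → ℝ := fun v => chMu v * (chebCoeff ε t v / 2) with he
  have hcv : ∀ v, chebCoeff ε t v ≤ 2 * F := by
    intro v
    have h2 : e v * (Polynomial.Chebyshev.T ℝ v).eval (17/8 : ℝ) ≤ F :=
      le_hasSum hy v (fun w _ => mul_nonneg (hc0 w) (by linarith [hTy1 w]))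
    have h3 : e v ≤ F := by
      have := mul_le_mul_of_nonneg_left (hTy1 v) (hc0 v)
      simp only [he] at *
      linarith
    have h4 : chebCoeff ε t v / 2 ≤ e v := by
      have hp : 0 ≤ chebCoeff ε t v / 2 :=
        nonneg_of_mul_nonneg_right (hc0 v) (by linarith [chMu_pos v])
      have := mul_le_mul_of_nonneg_right (chMu_pos v) hp
      simp only [he]; linarith
    linarith
  have hl := Real.log_two_gt_d9
  constructor
  · intro v _
    refine (hcv v).trans ?_
    have hs : 0 ≤ ε * t := by positivity
    calc 2 * F ≤ Real.exp (Real.log 2) * Real.exp (2.7 * (ε * t)) := by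
          rw [Real.exp_log (by norm_num)]; linarith
      _ = Real.exp (Real.log 2 + 2.7 * (ε * t)) := by rw [Real.exp_add]
      _ ≤ Real.exp (Real.log 2 * (5 * (ε * t + 1))) := by
          apply Real.exp_le_exp.2
          nlinarith
      _ = _ := by rw [Real.rpow_def_of_pos (by norm_num)]
  · intro x hx
    have hxa : |x| ≤ 1 := abs_le.2 hx
    have hTx : ∀ v : ℕ, |(Polynomial.Chebyshev.T ℝ v).eval x| ≤ 1 :=
      fun v => Polynomial.Chebyshev.abs_eval_T_real_le_one v hxa
    have hX := expansion h0 h1 ht1 (z := x) (by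
      rw [abs_mul, abs_of_pos h0]; nlinarith [abs_nonneg x])
      (fun v => (hTx v).trans (hTy1 v))
    have hsplit := hX.summable.sum_add_tsum_nat_add (d + 1)
    rw [hX.tsum_eq] at hsplit
    have hP : ∑ v ∈ Finset.range (d + 1), chMu v * (chebCoeff ε t v / 2) *
        (Polynomial.Chebyshev.T ℝ v).eval x = chebCoeff ε t 0 / 2
            + (∑ v ∈ Finset.Icc 1 d, chebCoeff ε t v * (Polynomial.Chebyshev.T ℝ v).eval x) := by
      rw [Finset.sum_range_succ', add_comm, Finset.range_eq_Ico,
        Finset.sum_Ico_add' (fun v : ℕ => chMu v * (chebCoeff ε t v / 2) *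
          (Polynomial.Chebyshev.T ℝ v).eval x) 0 d 1]
      congr 1
      · simp [chMu]
      · refine Finset.sum_congr (by ext; simp) (fun v hv => ?_)
        have : v ≠ 0 := by simp only [Finset.mem_Icc] at hv; omega
        simp only [chMu, if_neg this]; ring
    rw [← hP, ← hsplit]
    have hyt : Summable (fun v : ℕ => e (v + (d + 1)) *
        (Polynomial.Chebyshev.T ℝ ((v + (d + 1) : ℕ) : ℤ)).eval (17/8 : ℝ)) :=
      (summable_nat_add_iff (d + 1)).2 hy.summable
    have hyb : ∑' v : ℕ, e (v + (d + 1)) *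
        (Polynomial.Chebyshev.T ℝ ((v + (d + 1) : ℕ) : ℤ)).eval (17/8 : ℝ) ≤ F := by
      have h5 := hy.summable.sum_add_tsum_nat_add (d + 1)
      rw [hy.tsum_eq] at h5
      have h6 : 0 ≤ ∑ v ∈ Finset.range (d + 1), chMu v * (chebCoeff ε t v / 2) *
        (Polynomial.Chebyshev.T ℝ v).eval (17/8 : ℝ) :=
        Finset.sum_nonneg (fun v _ => mul_nonneg (hc0 v) (by linarith [hTy1 v]))
      simp only [he]
      linarith
    have htail : |∑' v : ℕ, e (v + (d + 1)) *
        (Polynomial.Chebyshev.T ℝ ((v + (d + 1) : ℕ) : ℤ)).eval x| ≤ 2 * (4:ℝ)⁻¹ ^ d * F := by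
      rw [← Real.norm_eq_abs]
      refine (tsum_of_norm_bounded (hyt.mul_left (2 * (4:ℝ)⁻¹ ^ d)).hasSum ?_).trans ?_
      · intro v
        rw [norm_mul, Real.norm_eq_abs, Real.norm_eq_abs, abs_of_nonneg (hc0 _)]
        have h7 := hTy4 (v + (d + 1))
        have h8 : (1:ℝ) ≤ 2 * 4⁻¹ ^ d * (Polynomial.Chebyshev.T ℝ ((v + (d + 1) : ℕ) : ℤ)).eval (17/8 : ℝ) := by
          have h9 : 2 * (4:ℝ)⁻¹ ^ d * ((4:ℝ) ^ (v + (d + 1)) / 2) = 4 ^ (v + 1) := by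
            rw [inv_pow]; field_simp; ring
          have h10 : (1:ℝ) ≤ 4 ^ (v + 1) := one_le_pow₀ (by norm_num)
          rw [← h9] at h10
          exact h10.trans (mul_le_mul_of_nonneg_left h7 (by positivity))
        calc _ ≤ e (v + (d + 1)) * (2 * 4⁻¹ ^ d * (Polynomial.Chebyshev.T ℝ ((v + (d + 1) : ℕ) : ℤ)).eval (17/8 : ℝ)) :=
              mul_le_mul_of_nonneg_left ((hTx _).trans h8) (hc0 _)
          _ = _ := by ring
      · rw [tsum_mul_left]
        exact mul_le_mul_of_nonneg_left hyb (by positivity)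
    have hfin : 2 * (4:ℝ)⁻¹ ^ d * F ≤ 2 * Real.exp (-(d:ℝ)) := by
      have h4 : (4:ℝ)⁻¹ ^ d = Real.exp (-(2 * Real.log 2 * d)) := by
        have : (4:ℝ)⁻¹ = Real.exp (-(2 * Real.log 2)) := by
          rw [Real.exp_neg, two_mul, Real.exp_add, Real.exp_log (by norm_num)]; norm_num
        rw [this, ← Real.exp_nat_mul]; congr 1; ring
      have : (4:ℝ)⁻¹ ^ d * F ≤ Real.exp (-(d:ℝ)) := by
        rw [h4]
        refine (mul_le_mul_of_nonneg_left hf (Real.exp_pos _).le).trans ?_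
        rw [← Real.exp_add]
        apply Real.exp_le_exp.2
        have h11 : (0:ℝ) ≤ d := by positivity
        have h12 : 1.38 * (d:ℝ) ≤ 2 * Real.log 2 * d :=
          mul_le_mul_of_nonneg_right (by linarith) h11
        have h13 : 10 * (ε * t) ≤ (d:ℝ) := by linarith
        clear_value F e
        linarith
      linarith
    have hd1 : 2 * Real.exp (-(d:ℝ)) ≤ 2 * (d + 1) * Real.exp (-(d:ℝ)) := by
      have : 0 ≤ (d:ℝ) * Real.exp (-(d:ℝ)) := by positivity
      linarith
    rw [sub_add_cancel_left, abs_neg]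
    exact htail.trans (hfin.trans hd1)
end

section
/- There is an absolute constant C > 0 such that the following holds. Let G be a d-regular simple graph on a finite vertex set V with |V| = n ≥ 2, let φ ∈ (0,1) and η ≥ 1 be reals, and suppose V is partitioned into nonempty clusters C_1, …, C_k such that φ_in(C_i) ≥ φ and |C_i| ≥ n/(η·k) for every i ∈ {1,…,k}. Let M̃ := (3/4)·I + (1/(4d))·A. Then for every integer t ≥ 10·(log n)/φ² and every vertex x ∈ V, ‖M̃^t 𝟙_x‖₂ ≤ C·√(η·k/n). -/
section helpers
variable {V : Type} [Fintype V] [DecidableEq V]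

lemma ind_bound (w : V → V → ℝ) (hs : ∀ x y, w x y = w y x)
    (C : Finset V) (c : ℝ)
    (S : Finset V) (hSC : S ⊆ C) (hc : c * S.card ≤ ∑ x ∈ S, ∑ y ∈ C \ S, w x y) :
    2 * c * S.card ≤ ∑ x ∈ C, ∑ y ∈ C, w x y *
      |(if x ∈ S then (1:ℝ) else 0) - (if y ∈ S then (1:ℝ) else 0)| := by
  have key : ∀ f : V → V → ℝ, ∑ x ∈ C, ∑ y ∈ C, f x y =
      ∑ x ∈ S, ∑ y ∈ S, f x y + ∑ x ∈ S, ∑ y ∈ C \ S, f x y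
      + (∑ x ∈ C \ S, ∑ y ∈ S, f x y + ∑ x ∈ C \ S, ∑ y ∈ C \ S, f x y) := by
    intro f
    rw [← Finset.sum_sdiff hSC, add_comm]
    congr 1
    · rw [← Finset.sum_add_distrib]
      exact Finset.sum_congr rfl fun x _ => by rw [← Finset.sum_sdiff hSC, add_comm]
    · rw [← Finset.sum_add_distrib]
      exact Finset.sum_congr rfl fun x _ => by rw [← Finset.sum_sdiff hSC, add_comm]
  rw [key]
  have h1 : ∑ x ∈ S, ∑ y ∈ S, w x y *
      |(if x ∈ S then (1:ℝ) else 0) - (if y ∈ S then (1:ℝ) else 0)| = 0 :=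
    Finset.sum_eq_zero fun x hx => Finset.sum_eq_zero fun y hy => by simp [hx, hy]
  have h4 : ∑ x ∈ C \ S, ∑ y ∈ C \ S, w x y *
      |(if x ∈ S then (1:ℝ) else 0) - (if y ∈ S then (1:ℝ) else 0)| = 0 :=
    Finset.sum_eq_zero fun x hx => Finset.sum_eq_zero fun y hy => by
      simp [(Finset.mem_sdiff.1 hx).2, (Finset.mem_sdiff.1 hy).2]
  have h2 : ∑ x ∈ S, ∑ y ∈ C \ S, w x y *
      |(if x ∈ S then (1:ℝ) else 0) - (if y ∈ S then (1:ℝ) else 0)|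
      = ∑ x ∈ S, ∑ y ∈ C \ S, w x y :=
    Finset.sum_congr rfl fun x hx => Finset.sum_congr rfl fun y hy => by
      simp [hx, (Finset.mem_sdiff.1 hy).2]
  have h3 : ∑ x ∈ C \ S, ∑ y ∈ S, w x y *
      |(if x ∈ S then (1:ℝ) else 0) - (if y ∈ S then (1:ℝ) else 0)|
      = ∑ x ∈ S, ∑ y ∈ C \ S, w x y := by
    rw [Finset.sum_comm]
    exact Finset.sum_congr rfl fun x hx => Finset.sum_congr rfl fun y hy => by
      simp [hx, (Finset.mem_sdiff.1 hy).2, hs y x]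
  rw [h1, h2, h3, h4]; linarith

lemma coarea (w : V → V → ℝ) (hs : ∀ x y, w x y = w y x) (hw : ∀ x y, 0 ≤ w x y)
    (C : Finset V) (c : ℝ)
    (hc : ∀ S ⊆ C, 0 < S.card → (S.card : ℝ) ≤ (C.card : ℝ) / 2 →
      c * S.card ≤ ∑ x ∈ S, ∑ y ∈ C \ S, w x y) (N : ℕ) :
    ∀ h : V → ℝ, (∀ x ∈ C, 0 ≤ h x) → (C.filter (fun x => 0 < h x)).card ≤ N →
      ((C.filter (fun x => 0 < h x)).card : ℝ) ≤ (C.card : ℝ) / 2 →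
      2 * c * ∑ x ∈ C, h x ≤ ∑ x ∈ C, ∑ y ∈ C, w x y * |h x - h y| := by
  induction N with
  | zero =>
    intro h h0 hN _
    have he : C.filter (fun x => 0 < h x) = ∅ := Finset.card_eq_zero.1 (by omega)
    have hz : ∑ x ∈ C, h x = 0 := Finset.sum_eq_zero fun x hx => by
      have := Finset.filter_eq_empty_iff.1 he hx
      linarith [h0 x hx]
    rw [hz, mul_zero]
    exact Finset.sum_nonneg fun x _ => Finset.sum_nonneg fun y _ =>
      mul_nonneg (hw x y) (abs_nonneg _)
  | succ N ih =>
    intro h h0 hN hh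
    set T := C.filter (fun x => 0 < h x) with hT
    by_cases hne : T.Nonempty
    · obtain ⟨z, hz, hmin⟩ := Finset.exists_min_image T h hne
      have hmpos : 0 < h z := (Finset.mem_filter.1 hz).2
      have hTC : T ⊆ C := Finset.filter_subset _ _
      set m := h z with hm
      set h' : V → ℝ := fun x => h x - m * (if x ∈ T then (1:ℝ) else 0) with hh'
      have hnT : ∀ x ∈ C, x ∉ T → h x = 0 := by
        intro x hx hxT
        have : ¬ 0 < h x := fun hp => hxT (Finset.mem_filter.2 ⟨hx, hp⟩)
        linarith [h0 x hx]
      have h'0 : ∀ x ∈ C, 0 ≤ h' x := by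
        intro x hx
        by_cases hxT : x ∈ T
        · have := hmin x hxT
          simp [hh', hxT]; linarith
        · simp [hh', hxT, hnT x hx hxT]
      have hsub : C.filter (fun x => 0 < h' x) ⊆ T.erase z := by
        intro x hx
        obtain ⟨hxC, hp⟩ := Finset.mem_filter.1 hx
        have hxT : x ∈ T := by
          by_contra hxT
          simp [hh', hxT, hnT x hxC hxT] at hp
        refine Finset.mem_erase.2 ⟨?_, hxT⟩
        rintro rfl
        simp [hh', hxT, hm] at hp
      have hcard := Finset.card_le_card hsub
      rw [Finset.card_erase_of_mem hz] at hcard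
      have hc1 : (C.filter (fun x => 0 < h' x)).card ≤ N := by omega
      have hc2 : ((C.filter (fun x => 0 < h' x)).card : ℝ) ≤ T.card := by
        exact_mod_cast (by omega : (C.filter (fun x => 0 < h' x)).card ≤ T.card)
      have IH := ih h' h'0 hc1 (hc2.trans hh)
      have hI := ind_bound w hs C c T hTC (hc T hTC hne.card_pos hh)
      have hsum : ∑ x ∈ C, h x = ∑ x ∈ C, h' x + m * T.card := by
        have : ∑ x ∈ C, (if x ∈ T then (1:ℝ) else 0) = T.card := by
          rw [Finset.sum_ite_mem, Finset.inter_eq_right.2 hTC]; simp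
        simp only [hh', Finset.sum_sub_distrib, ← Finset.mul_sum, this]
        ring
      have hpt : ∑ x ∈ C, ∑ y ∈ C, w x y * |h x - h y| =
          ∑ x ∈ C, ∑ y ∈ C, w x y * |h' x - h' y| + m * ∑ x ∈ C, ∑ y ∈ C, w x y *
      |(if x ∈ T then (1:ℝ) else 0) - (if y ∈ T then (1:ℝ) else 0)| := by
        simp only [Finset.mul_sum, ← Finset.sum_add_distrib]
        refine Finset.sum_congr rfl fun x hx => Finset.sum_congr rfl fun y hy => ?_
        have hx0 := h'0 x hx
        have hy0 := h'0 y hy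
        have : |h x - h y| = |h' x - h' y| +
            m * |(if x ∈ T then (1:ℝ) else 0) - (if y ∈ T then (1:ℝ) else 0)| := by
          by_cases hxT : x ∈ T <;> by_cases hyT : y ∈ T
          · simp [hh', hxT, hyT]
          · simp only [hh', hxT, hyT, hnT y hy hyT, if_true, if_false] at hx0 ⊢
            simp only [mul_one, mul_zero, sub_zero, abs_one] at hx0 ⊢
            rw [abs_of_nonneg hx0, abs_of_nonneg (h0 x hx)]; ring
          · simp only [hh', hxT, hyT, hnT x hx hxT, if_true, if_false] at hy0 ⊢
            simp only [mul_one, mul_zero, sub_zero, abs_one, zero_sub, abs_neg] at hy0 ⊢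
            rw [abs_of_nonneg hy0, abs_of_nonneg (h0 y hy)]; ring
          · simp [hh', hxT, hyT]
        rw [this]; ring
      rw [hpt, hsum]
      nlinarith [mul_le_mul_of_nonneg_left hI hmpos.le]
    · refine ih h h0 ?_ hh
      rw [← hT, Finset.not_nonempty_iff_eq_empty.1 hne]; simp

lemma coarea_signed (w : V → V → ℝ) (hs : ∀ x y, w x y = w y x) (hw : ∀ x y, 0 ≤ w x y)
    (C : Finset V) (c : ℝ)
    (hc : ∀ S ⊆ C, 0 < S.card → (S.card : ℝ) ≤ (C.card : ℝ) / 2 →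
      c * S.card ≤ ∑ x ∈ S, ∑ y ∈ C \ S, w x y) (h : V → ℝ)
    (h1 : ((C.filter (fun x => 0 < h x)).card : ℝ) ≤ (C.card : ℝ) / 2)
    (h2 : ((C.filter (fun x => h x < 0)).card : ℝ) ≤ (C.card : ℝ) / 2) :
      2 * c * ∑ x ∈ C, |h x| ≤ ∑ x ∈ C, ∑ y ∈ C, w x y * |h x - h y| := by
  have a := coarea w hs hw C c hc _ (fun x => max (h x) 0) (fun x _ => le_max_right _ _) le_rfl
    (by simpa using h1)
  have b := coarea w hs hw C c hc _ (fun x => max (-h x) 0) (fun x _ => le_max_right _ _) le_rfl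
    (by simpa using h2)
  have e1 : ∑ x ∈ C, |h x| = ∑ x ∈ C, max (h x) 0 + ∑ x ∈ C, max (-h x) 0 := by
    rw [← Finset.sum_add_distrib]
    refine Finset.sum_congr rfl fun x _ => ?_
    rcases le_total 0 (h x) with hx | hx
    · rw [abs_of_nonneg hx, max_eq_left hx, max_eq_right (by linarith)]; ring
    · rw [abs_of_nonpos hx, max_eq_right hx, max_eq_left (by linarith)]; ring
  have e2 : ∑ x ∈ C, ∑ y ∈ C, w x y * |h x - h y| =
      ∑ x ∈ C, ∑ y ∈ C, w x y * |max (h x) 0 - max (h y) 0| +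
      ∑ x ∈ C, ∑ y ∈ C, w x y * |max (-h x) 0 - max (-h y) 0| := by
    simp only [← Finset.sum_add_distrib, ← mul_add]
    refine Finset.sum_congr rfl fun x _ => Finset.sum_congr rfl fun y _ => ?_
    congr 1
    rcases le_total 0 (h x) with hx | hx <;> rcases le_total 0 (h y) with hy | hy
    · rw [max_eq_left hx, max_eq_right (by linarith : -h x ≤ 0), max_eq_left hy,
        max_eq_right (by linarith : -h y ≤ 0)]; simp
    · rw [max_eq_left hx, max_eq_right (by linarith : -h x ≤ 0), max_eq_right hy,
        max_eq_left (by linarith : 0 ≤ -h y), abs_of_nonneg (by linarith),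
        abs_of_nonneg (by linarith), abs_of_nonpos (by linarith)]; ring
    · rw [max_eq_right hx, max_eq_left (by linarith : 0 ≤ -h x), max_eq_left hy,
        max_eq_right (by linarith : -h y ≤ 0), abs_of_nonpos (by linarith),
        abs_of_nonpos (by linarith), abs_of_nonneg (by linarith)]; ring
    · rw [max_eq_right hx, max_eq_left (by linarith : 0 ≤ -h x), max_eq_right hy,
        max_eq_left (by linarith : 0 ≤ -h y), ← abs_neg]; simp; congr 1; ring
  rw [e1, e2, mul_add]
  exact add_le_add a b

lemma cheeger_median (w : V → V → ℝ) (hs : ∀ x y, w x y = w y x) (hw : ∀ x y, 0 ≤ w x y)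
    (C : Finset V) (D φ : ℝ) (hD : 0 < D) (hφ : 0 < φ) (hdeg : ∀ x, ∑ y ∈ C, w x y ≤ D)
    (hc : ∀ S ⊆ C, 0 < S.card → (S.card : ℝ) ≤ (C.card : ℝ) / 2 →
      φ * D * S.card ≤ ∑ x ∈ S, ∑ y ∈ C \ S, w x y) (g : V → ℝ)
    (h1 : ((C.filter (fun x => 0 < g x)).card : ℝ) ≤ (C.card : ℝ) / 2)
    (h2 : ((C.filter (fun x => g x < 0)).card : ℝ) ≤ (C.card : ℝ) / 2) :
      φ ^ 2 * D * ∑ x ∈ C, g x ^ 2 ≤ ∑ x ∈ C, ∑ y ∈ C, w x y * (g x - g y) ^ 2 := by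
  have hpos : ∀ x, 0 < g x * |g x| ↔ 0 < g x := by
    intro x
    constructor
    · intro h; by_contra hn; nlinarith [abs_nonneg (g x)]
    · intro h; exact mul_pos h (abs_pos.2 h.ne')
  have hneg : ∀ x, g x * |g x| < 0 ↔ g x < 0 := by
    intro x
    constructor
    · intro h; by_contra hn; nlinarith [abs_nonneg (g x)]
    · intro h; exact mul_neg_of_neg_of_pos h (abs_pos.2 h.ne)
  have a := coarea_signed w hs hw C (φ * D) hc (fun x => g x * |g x|)
    (by simpa only [hpos] using h1) (by simpa only [hneg] using h2)
  have e1 : ∑ x ∈ C, abs (g x * abs (g x)) = ∑ x ∈ C, g x ^ 2 :=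
    Finset.sum_congr rfl fun x _ => by rw [abs_mul, abs_abs, ← sq, sq_abs]
  simp only [e1] at a
  set Q := ∑ x ∈ C, g x ^ 2 with hQ
  set E := ∑ x ∈ C, ∑ y ∈ C, w x y * (g x - g y) ^ 2 with hE
  have hQ0 : 0 ≤ Q := Finset.sum_nonneg fun x _ => sq_nonneg _
  have hE0 : 0 ≤ E := Finset.sum_nonneg fun x _ => Finset.sum_nonneg fun y _ =>
    mul_nonneg (hw x y) (sq_nonneg _)
  have b : ∑ x ∈ C, ∑ y ∈ C, w x y * abs (g x * abs (g x) - g y * abs (g y)) ≤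
      ∑ x ∈ C, ∑ y ∈ C, w x y * (|g x - g y| * (|g x| + |g y|)) := by
    refine Finset.sum_le_sum fun x _ => Finset.sum_le_sum fun y _ =>
      mul_le_mul_of_nonneg_left ?_ (hw x y)
    rcases le_total 0 (g x) with hx | hx <;> rcases le_total 0 (g y) with hy | hy
    · rw [abs_of_nonneg hx, abs_of_nonneg hy, ← abs_of_nonneg (add_nonneg hx hy), ← abs_mul]
      exact le_of_eq (by congr 1; ring)
    · rw [abs_of_nonneg hx, abs_of_nonpos hy, abs_of_nonneg (by nlinarith),
        abs_of_nonneg (by linarith)]; nlinarith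
    · rw [abs_of_nonpos hx, abs_of_nonneg hy, abs_of_nonpos (by nlinarith),
        abs_of_nonpos (by linarith)]; nlinarith
    · rw [abs_of_nonpos hx, abs_of_nonpos hy,
        ← abs_of_nonneg (by linarith : 0 ≤ -g x + -g y), ← abs_mul]
      exact le_of_eq (by congr 1; ring)
  have cs : (∑ x ∈ C, ∑ y ∈ C, w x y * (|g x - g y| * (|g x| + |g y|))) ^ 2 ≤
      E * ∑ x ∈ C, ∑ y ∈ C, w x y * (|g x| + |g y|) ^ 2 := by
    rw [hE]
    simp only [← Finset.sum_product']
    refine Finset.sum_sq_le_sum_mul_sum_of_sq_le_mul _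
      (fun p _ => mul_nonneg (hw _ _) (sq_nonneg _))
      (fun p _ => mul_nonneg (hw _ _) (sq_nonneg _)) (fun p _ => ?_)
    rw [mul_pow, mul_pow, sq_abs]; exact le_of_eq (by ring)
  have f : ∑ x ∈ C, ∑ y ∈ C, w x y * (|g x| + |g y|) ^ 2 ≤ 4 * D * Q := by
    have s1 : ∑ x ∈ C, ∑ y ∈ C, w x y * g x ^ 2 ≤ D * Q := by
      rw [hQ, Finset.mul_sum]
      refine Finset.sum_le_sum fun x _ => ?_
      rw [← Finset.sum_mul]
      exact mul_le_mul_of_nonneg_right (hdeg x) (sq_nonneg _)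
    have s2 : ∑ x ∈ C, ∑ y ∈ C, w x y * g y ^ 2 ≤ D * Q := by
      rw [Finset.sum_comm]
      simpa only [hs] using (by simpa only [fun x y => hs x y] using s1 :
        ∑ x ∈ C, ∑ y ∈ C, w y x * g x ^ 2 ≤ D * Q)
    have s3 : ∑ x ∈ C, ∑ y ∈ C, w x y * (|g x| + |g y|) ^ 2 ≤
        2 * ∑ x ∈ C, ∑ y ∈ C, w x y * g x ^ 2 + 2 * ∑ x ∈ C, ∑ y ∈ C, w x y * g y ^ 2 := by
      simp only [Finset.mul_sum, ← Finset.sum_add_distrib]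
      refine Finset.sum_le_sum fun x _ => Finset.sum_le_sum fun y _ => ?_
      have : (|g x| + |g y|) ^ 2 ≤ 2 * g x ^ 2 + 2 * g y ^ 2 := by
        nlinarith [sq_abs (g x), sq_abs (g y), sq_nonneg (|g x| - |g y|)]
      nlinarith [mul_le_mul_of_nonneg_left this (hw x y)]
    linarith
  have hlow : 0 ≤ 2 * (φ * D) * Q := by positivity
  have fin : (2 * (φ * D) * Q) ^ 2 ≤ E * (4 * D * Q) :=
    ((pow_le_pow_left₀ hlow (a.trans b) 2).trans cs).trans (mul_le_mul_of_nonneg_left f hE0)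
  rcases hQ0.eq_or_lt with hq | hq
  · rw [← hq]; simpa using hE0
  · have : (4 * D * Q) * (φ ^ 2 * D * Q) ≤ (4 * D * Q) * E := by nlinarith
    exact le_of_mul_le_mul_left this (by positivity)

lemma exists_median (C : Finset V) (hC : C.Nonempty) (p : V → ℝ) :
    ∃ a : ℝ, ((C.filter (fun x => 0 < p x - a)).card : ℝ) ≤ (C.card : ℝ) / 2 ∧
      ((C.filter (fun x => p x - a < 0)).card : ℝ) ≤ (C.card : ℝ) / 2 := by
  set F := C.filter (fun x => ((C.filter (fun y => 0 < p y - p x)).card : ℝ) ≤ (C.card : ℝ) / 2)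
    with hF
  have hFne : F.Nonempty := by
    obtain ⟨z, hz, hmax⟩ := Finset.exists_max_image C p hC
    refine ⟨z, Finset.mem_filter.2 ⟨hz, ?_⟩⟩
    rw [Finset.filter_eq_empty_iff.2 (fun y hy => by linarith [hmax y hy])]
    simp; positivity
  obtain ⟨z, hz, hmin⟩ := Finset.exists_min_image F p hFne
  refine ⟨p z, (Finset.mem_filter.1 hz).2, ?_⟩
  by_contra hcon
  push Not at hcon
  have hne : (C.filter (fun x => p x - p z < 0)).Nonempty := by
    rw [← Finset.card_pos]
    have : (0:ℝ) < (C.filter (fun x => p x - p z < 0)).card := lt_of_le_of_lt (by positivity) hcon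
    exact_mod_cast this
  obtain ⟨b, hb, hbmax⟩ := Finset.exists_max_image _ p hne
  obtain ⟨hbC, hbz⟩ := Finset.mem_filter.1 hb
  have hbF : b ∈ F := by
    refine Finset.mem_filter.2 ⟨hbC, ?_⟩
    have hdis : C.filter (fun y => 0 < p y - p b) ⊆ C \ C.filter (fun x => p x - p z < 0) := by
      intro y hy
      obtain ⟨hyC, hyb⟩ := Finset.mem_filter.1 hy
      refine Finset.mem_sdiff.2 ⟨hyC, fun hyn => ?_⟩
      linarith [hbmax y hyn]
    have h1 := Finset.card_le_card hdis
    have h2 := Finset.card_sdiff_add_card_eq_card (Finset.filter_subset (fun x => p x - p z < 0) C)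
    have h3 : ((C.filter (fun y => 0 < p y - p b)).card : ℝ) +
        (C.filter (fun x => p x - p z < 0)).card ≤ C.card := by
      exact_mod_cast (by omega)
    linarith
  linarith [hmin b hbF]

lemma cheeger (w : V → V → ℝ) (hs : ∀ x y, w x y = w y x) (hw : ∀ x y, 0 ≤ w x y)
    (C : Finset V) (hC : C.Nonempty) (D φ : ℝ) (hD : 0 < D) (hφ : 0 < φ)
    (hdeg : ∀ x, ∑ y ∈ C, w x y ≤ D)
    (hc : ∀ S ⊆ C, 0 < S.card → (S.card : ℝ) ≤ (C.card : ℝ) / 2 →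
      φ * D * S.card ≤ ∑ x ∈ S, ∑ y ∈ C \ S, w x y) (p : V → ℝ) :
      φ ^ 2 * D * (∑ x ∈ C, p x ^ 2 - (∑ x ∈ C, p x) ^ 2 / C.card) ≤
        ∑ x ∈ C, ∑ y ∈ C, w x y * (p x - p y) ^ 2 := by
  obtain ⟨a, h1, h2⟩ := exists_median C hC p
  have h := cheeger_median w hs hw C D φ hD hφ hdeg hc (fun x => p x - a) h1 h2
  simp only [sub_sub_sub_cancel_right] at h
  refine le_trans (mul_le_mul_of_nonneg_left ?_ (by positivity)) h
  have e : ∑ x ∈ C, (p x - a) ^ 2 = ∑ x ∈ C, p x ^ 2 - 2 * a * ∑ x ∈ C, p x + C.card * a ^ 2 := by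
    simp only [sub_sq, Finset.sum_add_distrib, Finset.sum_sub_distrib, Finset.sum_const,
      nsmul_eq_mul, Finset.mul_sum]
    congr 2
    exact Finset.sum_congr rfl fun x _ => by ring
  rw [e]
  have hn : (0:ℝ) < C.card := by exact_mod_cast hC.card_pos
  set s := ∑ x ∈ C, p x
  have : 0 ≤ (s - C.card * a) ^ 2 / C.card := by positivity
  have e2 : (s - C.card * a) ^ 2 / C.card = s ^ 2 / C.card - 2 * a * s + C.card * a ^ 2 := by
    field_simp; ring
  linarith

lemma global_bound (w : V → V → ℝ) (hs : ∀ x y, w x y = w y x) (hw : ∀ x y, 0 ≤ w x y)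
    (D φ B : ℝ) (hD : 0 < D) (hφ : 0 < φ) (hdeg : ∀ x, ∑ y, w x y = D)
    (k : ℕ) (Cl : Fin k → Finset V) (hne : ∀ i, (Cl i).Nonempty)
    (hdis : ∀ i j, i ≠ j → Disjoint (Cl i) (Cl j))
    (hun : Finset.univ.biUnion Cl = Finset.univ)
    (hB0 : 0 ≤ B) (hB : ∀ i, 1 / ((Cl i).card : ℝ) ≤ B)
    (hc : ∀ i, ∀ S ⊆ Cl i, 0 < S.card → (S.card : ℝ) ≤ ((Cl i).card : ℝ) / 2 →
      φ * D * S.card ≤ ∑ x ∈ S, ∑ y ∈ Cl i \ S, w x y)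
    (p : V → ℝ) (hp0 : ∀ x, 0 ≤ p x) (hp1 : ∑ x, p x = 1) :
    φ ^ 2 * D * (∑ x, p x ^ 2 - B) ≤ ∑ x, ∑ y, w x y * (p x - p y) ^ 2 := by
  have part : ∀ f : V → ℝ, ∑ x, f x = ∑ i, ∑ x ∈ Cl i, f x := by
    intro f
    rw [← hun, Finset.sum_biUnion]
    intro i _ j _ hij
    exact hdis i j hij
  have hch := fun i => cheeger w hs hw (Cl i) (hne i) D φ hD hφ
    (fun x => (Finset.sum_le_univ_sum_of_nonneg (fun y => hw x y)).trans (hdeg x).le) (hc i) p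
  have hsum := Finset.sum_le_sum (fun i (_ : i ∈ Finset.univ) => hch i)
  rw [← Finset.mul_sum, Finset.sum_sub_distrib, ← part] at hsum
  have hr : ∑ i, ∑ x ∈ Cl i, ∑ y ∈ Cl i, w x y * (p x - p y) ^ 2 ≤
      ∑ x, ∑ y, w x y * (p x - p y) ^ 2 := by
    rw [part]
    exact Finset.sum_le_sum fun i _ => Finset.sum_le_sum fun x _ =>
      Finset.sum_le_univ_sum_of_nonneg fun y => mul_nonneg (hw x y) (sq_nonneg _)
  have hq : ∑ i, (∑ x ∈ Cl i, p x) ^ 2 / (Cl i).card ≤ B := by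
    have m1 : ∑ i, ∑ x ∈ Cl i, p x = 1 := by rw [← part, hp1]
    have m0 : ∀ i, 0 ≤ ∑ x ∈ Cl i, p x := fun i => Finset.sum_nonneg fun x _ => hp0 x
    calc ∑ i, (∑ x ∈ Cl i, p x) ^ 2 / (Cl i).card ≤ ∑ i, B * ∑ x ∈ Cl i, p x := by
          refine Finset.sum_le_sum fun i _ => ?_
          have hle : ∑ x ∈ Cl i, p x ≤ 1 := by
            rw [← m1]
            exact Finset.single_le_sum (f := fun i => ∑ x ∈ Cl i, p x)
              (fun j _ => m0 j) (Finset.mem_univ i)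
          have : (∑ x ∈ Cl i, p x) ^ 2 ≤ ∑ x ∈ Cl i, p x := by nlinarith [m0 i]
          rw [div_eq_mul_one_div, mul_comm]
          exact mul_le_mul (hB i) this (sq_nonneg _) hB0
      _ = B := by rw [← Finset.mul_sum, m1, mul_one]
  refine le_trans (mul_le_mul_of_nonneg_left ?_ (by positivity)) (hsum.trans hr)
  linarith

lemma one_step (w : V → V → ℝ) (hs : ∀ x y, w x y = w y x) (hw : ∀ x y, 0 ≤ w x y)
    (D : ℝ) (hD : 0 < D) (hdeg : ∀ x, ∑ y, w x y = D) (p : V → ℝ) :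
    ∑ x, (3/4 * p x + 1/(4*D) * ∑ y, w x y * p y) ^ 2 ≤
      ∑ x, p x ^ 2 - 3 / (16 * D) * ∑ x, ∑ y, w x y * (p x - p y) ^ 2 := by
  set L : V → ℝ := fun x => ∑ y, w x y * (p x - p y) with hL
  set E := ∑ x, ∑ y, w x y * (p x - p y) ^ 2 with hE
  have hLx : ∀ x, L x = D * p x - ∑ y, w x y * p y := by
    intro x
    simp only [hL, mul_sub, Finset.sum_sub_distrib, ← Finset.sum_mul, hdeg]
  have hpL : ∑ x, p x * L x = E / 2 := by
    have a1 : ∑ x, p x * L x = ∑ x, ∑ y, w x y * ((p x - p y) * p x) := by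
      simp only [hL, Finset.mul_sum]
      exact Finset.sum_congr rfl fun x _ => Finset.sum_congr rfl fun y _ => by ring
    have a2 : ∑ x, p x * L x = ∑ x, ∑ y, w x y * ((p y - p x) * p y) := by
      rw [a1, Finset.sum_comm]
      exact Finset.sum_congr rfl fun x _ => Finset.sum_congr rfl fun y _ => by rw [hs]
    have : ∑ x, p x * L x + ∑ x, p x * L x = E := by
      nth_rewrite 1 [a1]
      rw [a2, hE]
      simp only [← Finset.sum_add_distrib]
      exact Finset.sum_congr rfl fun x _ => Finset.sum_congr rfl fun y _ => by ring
    linarith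
  have hLL : ∑ x, L x ^ 2 ≤ D * E := by
    rw [hE, Finset.mul_sum]
    refine Finset.sum_le_sum fun x _ => ?_
    rw [← hdeg x]
    exact Finset.sum_sq_le_sum_mul_sum_of_sq_le_mul _ (fun y _ => hw x y)
      (fun y _ => mul_nonneg (hw x y) (sq_nonneg _)) (fun y _ => le_of_eq (by ring))
  have e : ∑ x, (3/4 * p x + 1/(4*D) * ∑ y, w x y * p y) ^ 2 =
      ∑ x, p x ^ 2 - 1/(2*D) * ∑ x, p x * L x + 1/(16*D^2) * ∑ x, L x ^ 2 := by
    simp only [Finset.mul_sum, ← Finset.sum_sub_distrib, ← Finset.sum_add_distrib]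
    refine Finset.sum_congr rfl fun x _ => ?_
    have : ∑ y, w x y * p y = D * p x - L x := by rw [hLx]; ring
    rw [← Finset.mul_sum, this]
    field_simp
    ring
  rw [e, hpL]
  have : 1/(16*D^2) * ∑ x, L x ^ 2 ≤ 1/(16*D^2) * (D * E) :=
    mul_le_mul_of_nonneg_left hLL (by positivity)
  have e3 : 1/(16*D^2) * (D * E) = 1/(16*D) * E := by field_simp
  have e4 : 1/(2*D) * (E/2) - 1/(16*D) * E = 3/(16*D) * E := by field_simp; ring
  linarith

end helpers


open Finset

/-- `edgeCount G S T` is the number of edges of `G` with one endpoint in `S` and the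
other in `T` (for disjoint `S`, `T` this counts each such edge exactly once). -/
def edgeCount {V : Type} [Fintype V] [DecidableEq V] (G : SimpleGraph V)
    [DecidableRel G.Adj] (S T : Finset V) : ℕ :=
  ∑ x ∈ S, ∑ y ∈ T, if G.Adj x y then 1 else 0

/-- In a `d`-regular graph partitioned into clusters of inner conductance
at least `φ` and size at least `n/(ηk)`, for `t ≥ 10 log n / φ²` the `t`-step distribution of
the `3/4`-lazy random walk `M̃ = (3/4)I + (1/(4d))A` started at any vertex has Euclidean
norm at most `C √(ηk/n)`. -/
theorem stmt_2 :
    ∃ C : ℝ, 0 < C ∧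
    ∀ (V : Type) [Fintype V] [DecidableEq V] (G : SimpleGraph V) [DecidableRel G.Adj]
      (d k n : ℕ) (φ η : ℝ) (Cl : Fin k → Finset V),
      n = Fintype.card V → 2 ≤ n → 1 ≤ d →
      G.IsRegularOfDegree d →
      φ ∈ Set.Ioo (0:ℝ) 1 → 1 ≤ η →
      (∀ i, (Cl i).Nonempty) →
      (∀ i j, i ≠ j → Disjoint (Cl i) (Cl j)) →
      (Finset.univ.biUnion Cl = Finset.univ) →
      (∀ i, (n : ℝ) / (η * k) ≤ ((Cl i).card : ℝ)) →
      (∀ i, ∀ S ⊆ Cl i, 0 < S.card → (S.card : ℝ) ≤ ((Cl i).card : ℝ) / 2 →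
        φ * (d * S.card) ≤ (edgeCount G S (Cl i \ S) : ℝ)) →
      ∀ t : ℕ, 10 * Real.log n / φ ^ 2 ≤ (t : ℝ) →
      ∀ x : V,
        Real.sqrt (∑ y : V,
            (Matrix.mulVec
              (((3/4 : ℝ) • (1 : Matrix V V ℝ) + (1/(4 * (d:ℝ))) • G.adjMatrix ℝ) ^ t)
              (Pi.single x 1) y) ^ 2)
          ≤ C * Real.sqrt (η * k / n) := by
  refine ⟨Real.sqrt 2, by positivity, ?_⟩
  intro V _ _ G _ d k n φ η Cl hn hn2 hd hreg hφ hη hne hdis hun hsize hcond t ht x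
  obtain ⟨hφ0, hφ1⟩ := hφ
  have hD : (0:ℝ) < d := by exact_mod_cast hd
  have hn0 : (0:ℝ) < n := by exact_mod_cast (by omega : 0 < n)
  have hk : 0 < k := by
    have : x ∈ Finset.univ.biUnion Cl := by rw [hun]; exact Finset.mem_univ x
    obtain ⟨i, _, _⟩ := Finset.mem_biUnion.1 this
    exact i.pos
  have hk1 : (1:ℝ) ≤ k := by exact_mod_cast hk
  set w : V → V → ℝ := fun x y => G.adjMatrix ℝ x y with hwdef
  have hs : ∀ x y, w x y = w y x := by
    intro x y; simp [hwdef, SimpleGraph.adjMatrix_apply, G.adj_comm]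
  have hw : ∀ x y, 0 ≤ w x y := by
    intro x y; simp only [hwdef, SimpleGraph.adjMatrix_apply]; split_ifs <;> norm_num
  have hdeg : ∀ x, ∑ y, w x y = d := by
    intro x
    simp only [hwdef, SimpleGraph.adjMatrix_apply, Finset.sum_boole]
    rw [← hreg x, ← SimpleGraph.card_neighborFinset_eq_degree]
    congr 2
    ext y; simp
  set B : ℝ := η * k / n with hBdef
  have hB0 : 0 < B := by positivity
  have hB : ∀ i, 1 / ((Cl i).card : ℝ) ≤ B := by
    intro i
    have h1 : 0 < (n:ℝ) / (η * k) := by positivity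
    have := one_div_le_one_div_of_le h1 (hsize i)
    rwa [one_div_div] at this
  have hc : ∀ i, ∀ S ⊆ Cl i, 0 < S.card → (S.card : ℝ) ≤ ((Cl i).card : ℝ) / 2 →
      φ * d * S.card ≤ ∑ x ∈ S, ∑ y ∈ Cl i \ S, w x y := by
    intro i S h1 h2 h3
    have := hcond i S h1 h2 h3
    simp only [edgeCount] at this
    push_cast at this
    simp only [hwdef, SimpleGraph.adjMatrix_apply]
    rw [mul_assoc]; exact this
  set M : Matrix V V ℝ := (3/4 : ℝ) • (1 : Matrix V V ℝ) + (1/(4 * (d:ℝ))) • G.adjMatrix ℝ with hM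
  set p : ℕ → V → ℝ := fun t => Matrix.mulVec (M ^ t) (Pi.single x 1) with hp
  have hstep : ∀ t y, p (t+1) y = 3/4 * p t y + 1/(4*(d:ℝ)) * ∑ z, w y z * p t z := by
    intro t y
    have : p (t+1) = Matrix.mulVec M (p t) := by
      simp only [hp, pow_succ', Matrix.mulVec_mulVec]
    rw [this, hM, Matrix.add_mulVec, Matrix.smul_mulVec, Matrix.smul_mulVec, Matrix.one_mulVec]
    simp [Matrix.mulVec, dotProduct, hwdef]
  have hp0 : p 0 = Pi.single x 1 := by
    simp only [hp, pow_zero, Matrix.one_mulVec]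
  have hinv : ∀ t, (∀ y, 0 ≤ p t y) ∧ ∑ y, p t y = 1 := by
    intro t
    induction t with
    | zero =>
      rw [hp0]
      refine ⟨fun y => ?_, by simp⟩
      by_cases h : y = x
      · subst h; simp
      · simp [h]
    | succ t ih =>
      refine ⟨fun y => ?_, ?_⟩
      · rw [hstep]
        have h1 := ih.1 y
        have : 0 ≤ ∑ z, w y z * p t z := Finset.sum_nonneg fun z _ => mul_nonneg (hw y z) (ih.1 z)
        positivity
      · simp only [hstep, Finset.sum_add_distrib, ← Finset.mul_sum]
        rw [Finset.sum_comm]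
        have : ∀ z, ∑ y, w y z * p t z = d * p t z := by
          intro z
          rw [← Finset.sum_mul, ← hdeg z]
          congr 1
          exact Finset.sum_congr rfl fun y _ => hs y z
        simp only [this, ← Finset.mul_sum, ih.2]
        field_simp
        norm_num
  set r : ℝ := 1 - 3 * φ ^ 2 / 16 with hr
  have hr0 : 0 ≤ r := by rw [hr]; nlinarith
  have hdec : ∀ t, ∑ y, p t y ^ 2 - B ≤ r ^ t := by
    intro t
    induction t with
    | zero =>
      have : ∑ y, p 0 y ^ 2 = 1 := by
        rw [hp0, Finset.sum_eq_single x] <;> simp +contextual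
      rw [this]; simp; exact hB0.le
    | succ t ih =>
      have h1 := one_step w hs hw d hD hdeg (p t)
      have h2 := global_bound w hs hw d φ B hD hφ0 hdeg k Cl hne hdis hun hB0.le hB hc (p t)
        (hinv t).1 (hinv t).2
      have h3 := mul_le_mul_of_nonneg_left h2 (by positivity : (0:ℝ) ≤ 3 / (16 * d))
      have e : 3 / (16 * (d:ℝ)) * (φ ^ 2 * d * (∑ y, p t y ^ 2 - B)) =
          3 * φ^2/16 * (∑ y, p t y ^ 2 - B) := by field_simp
      rw [e] at h3
      simp only [hstep]
      rw [pow_succ]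
      have h4 := mul_le_mul_of_nonneg_right ih hr0
      rw [hr] at h4 ⊢
      linarith
  have hrt : r ^ t ≤ B := by
    have h1 : r ≤ Real.exp (-(3 * φ^2/16)) := by
      have := Real.add_one_le_exp (-(3 * φ^2/16))
      rw [hr]; linarith
    have h2 : r ^ t ≤ Real.exp (-(3 * φ^2/16)) ^ t := pow_le_pow_left₀ hr0 h1 t
    rw [← Real.exp_nat_mul] at h2
    have hlog : 0 ≤ Real.log n := Real.log_natCast_nonneg n
    have h3 : 10 * Real.log n ≤ t * φ ^ 2 := by
      rwa [div_le_iff₀ (by positivity)] at ht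
    have h4 : (t:ℝ) * -(3 * φ^2/16) ≤ - Real.log n := by nlinarith
    have h5 := Real.exp_le_exp.2 h4
    rw [Real.exp_neg, Real.exp_log hn0] at h5
    have h6 : (n:ℝ)⁻¹ ≤ B := by
      rw [hBdef, inv_eq_one_div]
      apply div_le_div_of_nonneg_right _ hn0.le
      nlinarith
    linarith
  rw [← Real.sqrt_mul (by norm_num)]
  apply Real.sqrt_le_sqrt
  have := hdec t
  change ∑ y, p t y ^ 2 ≤ 2 * B
  linarith
end

section
/- Let V and S be nonempty finite sets, let p be a probability mass function on V, and for each y ∈ S let p_y be a probability mass function on V; set p_S := (1/|S|)·Σ_{y∈S} p_y. Let σ : S → {−1,1} be a sign assignment, and let n, k, β, γ > 0 be reals such that: (1) Σ_{v∈V} p(v)·p_S(v) ≤ β·k/(n·|S|); and (2) Σ_{v∈V} p(v)·p_S(v)² ≤ γ·k²/(n²·|S|²) and Σ_{v∈V} p(v)²·p_S(v) ≤ γ·k²/(n²·|S|). Let Q and R be positive integers, let W¹, …, W^Q be i.i.d. samples from p, and for each y ∈ S let W_y¹, …, W_y^R be i.i.d. samples from p_y, with all of these sample families mutually independent. Define the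 empirical distributions p̂(v) := (1/Q)·#{q ∈ [Q] : W^q = v} and p̂_y(v) := (1/R)·#{r ∈ [R] : W_y^r = v}, and set Z := Σ_{v∈V} p̂(v)·Σ_{y∈S} σ(y)·p̂_y(v). Then for all reals ρ > 0 and ξ > 0, if Q·R ≥ (7β/(ρ·ξ²))·(n/k) and Q ≥ 7(γ+β²)/(ρ·ξ²) and R ≥ 7(γ+β²)/(ρ·ξ²), then with probability at least 1 − ρ over the random samples, |Z − Σ_{v∈V} p(v)·Σ_{y∈S} σ(y)·p_y(v)| ≤ ξ·k/n. -/
open Finset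
open scoped Classical

section Helpers

variable {ι V : Type} [Fintype ι] [DecidableEq ι] [Fintype V]

lemma exp_prod (w φ : ι → V → ℝ) :
    ∑ ω : ι → V, (∏ l, w l (ω l)) * ∏ l, φ l (ω l) = ∏ l, ∑ v, w l v * φ l v := by
  rw [Finset.prod_univ_sum, Fintype.piFinset_univ]
  exact Finset.sum_congr rfl fun ω _ => Finset.prod_mul_distrib.symm

lemma exp_one (w : ι → V → ℝ) (hw : ∀ i, ∑ v, w i v = 1) :
    ∑ ω : ι → V, ∏ l, w l (ω l) = 1 := by
  have := exp_prod w (fun _ _ => 1)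
  simpa [hw] using this

lemma exp_single (w : ι → V → ℝ) (hw : ∀ i, ∑ v, w i v = 1) (i : ι) (a : V → ℝ) :
    ∑ ω : ι → V, (∏ l, w l (ω l)) * a (ω i) = ∑ v, w i v * a v := by
  have h := exp_prod w (fun l v => if l = i then a v else 1)
  have e : ∀ l, (∑ v, w l v * (if l = i then a v else 1))
      = if l = i then ∑ v, w i v * a v else 1 := by
    intro l
    by_cases hl : l = i
    · subst hl; simp
    · simp [hl, hw]
  simp only [e] at h
  simpa using h

lemma exp_pair (w : ι → V → ℝ) (hw : ∀ i, ∑ v, w i v = 1) (i j : ι) (hij : i ≠ j)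
    (a b : V → ℝ) :
    ∑ ω : ι → V, (∏ l, w l (ω l)) * (a (ω i) * b (ω j))
      = (∑ v, w i v * a v) * ∑ v, w j v * b v := by
  have h := exp_prod w (fun l v => (if l = i then a v else 1) * (if l = j then b v else 1))
  have e : ∀ l, (∑ v, w l v * ((if l = i then a v else 1) * (if l = j then b v else 1)))
      = (if l = i then ∑ v, w i v * a v else 1) * (if l = j then ∑ v, w j v * b v else 1) := by
    intro l
    by_cases hl : l = i
    · subst hl; simp [hij]
    · by_cases hl' : l = j
      · subst hl'; simp [hl]
      · simp [hl, hl', hw]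
  simp only [e, Finset.prod_mul_distrib] at h
  simpa using h

lemma exp_sq (w : ι → V → ℝ) (hw : ∀ i, ∑ v, w i v = 1)
    (f : ι → V → ℝ) (m : ℝ) :
    ∑ ω : ι → V, (∏ l, w l (ω l)) * (∑ i, f i (ω i) - m) ^ 2
      ≤ (∑ i, ∑ v, w i v * f i v - m) ^ 2 + ∑ i, ∑ v, w i v * f i v ^ 2 := by
  set e : ι → ℝ := fun i => ∑ v, w i v * f i v with he
  set h : ι → V → ℝ := fun i v => f i v - e i with hh
  have hh0 : ∀ i, ∑ v, w i v * h i v = 0 := by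
    intro i
    simp only [hh, mul_sub, Finset.sum_sub_distrib, ← Finset.sum_mul, hw]
    simp [he]
  have hh2 : ∀ i, ∑ v, w i v * (h i v * h i v) ≤ ∑ v, w i v * f i v ^ 2 := by
    intro i
    have : ∑ v, w i v * (h i v * h i v) = ∑ v, w i v * f i v ^ 2 - e i ^ 2 := by
      have e1 : ∀ v, w i v * (h i v * h i v)
          = w i v * f i v ^ 2 - 2 * e i * (w i v * f i v) + w i v * e i ^ 2 := by
        intro v; simp only [hh]; ring
      simp only [e1, Finset.sum_add_distrib, Finset.sum_sub_distrib, ← Finset.mul_sum,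
        ← Finset.sum_mul, hw]
      change _ - 2 * e i * e i + _ = _
      ring
    rw [this]; nlinarith [sq_nonneg (e i)]
  set c : ℝ := ∑ i, e i - m with hc
  have key : ∀ ω : ι → V, (∏ l, w l (ω l)) * (∑ i, f i (ω i) - m) ^ 2
      = (∏ l, w l (ω l)) * c ^ 2 + 2 * c * ∑ i, (∏ l, w l (ω l)) * h i (ω i)
        + ∑ i, ∑ j, (∏ l, w l (ω l)) * (h i (ω i) * h j (ω j)) := by
    intro ω
    have : ∑ i, f i (ω i) - m = c + ∑ i, h i (ω i) := by
      simp only [hh, hc, Finset.sum_sub_distrib]; ring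
    rw [this]
    simp only [← Finset.mul_sum, ← Finset.sum_mul]
    ring
  simp only [key, Finset.sum_add_distrib, ← Finset.sum_mul, ← Finset.mul_sum, exp_one w hw]
  have t1 : ∑ ω : ι → V, (∏ l, w l (ω l)) * ∑ i, h i (ω i) = 0 := by
    simp only [Finset.mul_sum]
    rw [Finset.sum_comm]
    simp [exp_single w hw, hh0]
  have t2 : ∑ ω : ι → V, (∏ l, w l (ω l)) * ∑ i, h i (ω i) * ∑ j, h j (ω j)
      = ∑ i, ∑ v, w i v * (h i v * h i v) := by
    simp only [Finset.mul_sum]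
    rw [Finset.sum_comm]
    refine Finset.sum_congr rfl fun i _ => ?_
    rw [Finset.sum_comm, Finset.sum_eq_single i]
    · exact exp_single w hw i (fun v => h i v * h i v)
    · intro j _ hj
      rw [exp_pair w hw i j hj.symm, hh0]; simp
    · simp
  have t3 := Finset.sum_le_sum fun i (_ : i ∈ Finset.univ) => hh2 i
  rw [t1]
  simp only [Finset.sum_mul] at t2 ⊢
  linarith

end Helpers

lemma emp_sum {V : Type} [Fintype V] [DecidableEq V] {N : ℕ} (x : Fin N → V) (a : V → ℝ) :
    ∑ v, ((N : ℝ)⁻¹ * ((Finset.univ.filter (fun q => x q = v)).card : ℝ)) * a v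
      = ∑ q, (N : ℝ)⁻¹ * a (x q) := by
  have : ∀ v, ((N : ℝ)⁻¹ * ((Finset.univ.filter (fun q => x q = v)).card : ℝ)) * a v
      = ∑ q, if x q = v then (N : ℝ)⁻¹ * a v else 0 := by
    intro v
    rw [← Finset.sum_filter, Finset.sum_const, nsmul_eq_mul]; ring
  simp only [this]
  rw [Finset.sum_comm]
  simp

/-- Second moment over the `S × R` samples for a fixed test function `a`. -/
lemma inner_bound {V S : Type} [Fintype V] [DecidableEq V] [Fintype S] [DecidableEq S]
    (py : S → V → ℝ) (hpy1 : ∀ y, ∑ v, py y v = 1)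
    (σ : S → ℝ) (hσ : ∀ y, σ y = 1 ∨ σ y = -1) (R : ℕ) (hR : 0 < R) (a : V → ℝ) (m : ℝ) :
    ∑ ω : S → Fin R → V, (∏ y, ∏ r, py y (ω y r)) *
      ((∑ v, a v * ∑ y, σ y * ((R : ℝ)⁻¹ *
        ((Finset.univ.filter (fun r => ω y r = v)).card : ℝ))) - m) ^ 2
    ≤ (∑ v, a v * ∑ y, σ y * py y v - m) ^ 2 + (R : ℝ)⁻¹ * ∑ v, (∑ y, py y v) * a v ^ 2 := by
  have hR0 : (R : ℝ) ≠ 0 := by positivity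
  have hσ2 : ∀ y, σ y ^ 2 = 1 := by
    intro y; rcases hσ y with h | h <;> rw [h] <;> norm_num
  have h := exp_sq (ι := S × Fin R) (fun i v => py i.1 v) (fun i => hpy1 i.1)
    (fun i v => σ i.1 * ((R : ℝ)⁻¹ * a v)) m
  have r1 : ∑ i : S × Fin R, ∑ v, py i.1 v * (σ i.1 * ((R : ℝ)⁻¹ * a v))
      = ∑ v, a v * ∑ y, σ y * py y v := by
    rw [Fintype.sum_prod_type]
    simp only [Finset.sum_const, Finset.card_univ, Fintype.card_fin, nsmul_eq_mul,
      Finset.mul_sum]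
    rw [Finset.sum_comm]
    refine Finset.sum_congr rfl fun v _ => Finset.sum_congr rfl fun y _ => ?_
    field_simp
  have r2 : ∑ i : S × Fin R, ∑ v, py i.1 v * (σ i.1 * ((R : ℝ)⁻¹ * a v)) ^ 2
      = (R : ℝ)⁻¹ * ∑ v, (∑ y, py y v) * a v ^ 2 := by
    rw [Fintype.sum_prod_type]
    simp only [Finset.sum_const, Finset.card_univ, Fintype.card_fin, nsmul_eq_mul,
      Finset.mul_sum, Finset.sum_mul, mul_pow, hσ2]
    rw [Finset.sum_comm]
    refine Finset.sum_congr rfl fun v _ => Finset.sum_congr rfl fun y _ => ?_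
    field_simp
  rw [r1, r2] at h
  refine le_trans (le_of_eq ?_) h
  refine Fintype.sum_equiv (Equiv.curry S (Fin R) V).symm _ _ fun ω => ?_
  rw [Fintype.prod_prod_type, Fintype.sum_prod_type]
  have hz : ∑ v, a v * ∑ y, σ y * ((R : ℝ)⁻¹ *
        ((Finset.univ.filter (fun r => ω y r = v)).card : ℝ))
      = ∑ y, ∑ r, σ y * ((R : ℝ)⁻¹ * a (ω y r)) := by
    have e : ∀ y, ∑ r, σ y * ((R : ℝ)⁻¹ * a (ω y r)) = σ y * ∑ r, (R : ℝ)⁻¹ * a (ω y r) :=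
      fun y => (Finset.mul_sum _ _ _).symm
    simp only [e, ← emp_sum (ω _) a, Finset.mul_sum]
    rw [Finset.sum_comm]
    refine Finset.sum_congr rfl fun v _ => Finset.sum_congr rfl fun y _ => ?_
    ring
  rw [hz]
  rfl

set_option maxHeartbeats 1000000

/-- Collision-counting: the signed empirical collision statistic `Z`
approximates `⟨p, ∑_y σ(y) p_y⟩` with probability at least `1 - ρ`, where the probability
of an event is the sum, over all outcomes of the independent samples, of the product of
the probabilities of the individual samples. -/
theorem stmt_4
    (V S : Type) [Fintype V] [DecidableEq V] [Fintype S] [DecidableEq S]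
    [Nonempty V] [Nonempty S]
    (p : V → ℝ) (hp0 : ∀ v, 0 ≤ p v) (hp1 : ∑ v, p v = 1)
    (py : S → V → ℝ) (hpy0 : ∀ y v, 0 ≤ py y v) (hpy1 : ∀ y, ∑ v, py y v = 1)
    (pS : V → ℝ) (hpS : ∀ v, pS v = (Fintype.card S : ℝ)⁻¹ * ∑ y, py y v)
    (σ : S → ℝ) (hσ : ∀ y, σ y = 1 ∨ σ y = -1)
    (n k β γ : ℝ) (hn : 0 < n) (hk : 0 < k) (hβ : 0 < β) (hγ : 0 < γ)
    (h1 : ∑ v, p v * pS v ≤ β * k / (n * Fintype.card S))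
    (h2a : ∑ v, p v * pS v ^ 2 ≤ γ * k ^ 2 / (n ^ 2 * (Fintype.card S : ℝ) ^ 2))
    (h2b : ∑ v, p v ^ 2 * pS v ≤ γ * k ^ 2 / (n ^ 2 * Fintype.card S))
    (Q R : ℕ) (hQ : 0 < Q) (hR : 0 < R)
    (ρ ξ : ℝ) (hρ : 0 < ρ) (hξ : 0 < ξ)
    (hQR : 7 * β / (ρ * ξ ^ 2) * (n / k) ≤ (Q : ℝ) * R)
    (hQ' : 7 * (γ + β ^ 2) / (ρ * ξ ^ 2) ≤ (Q : ℝ))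
    (hR' : 7 * (γ + β ^ 2) / (ρ * ξ ^ 2) ≤ (R : ℝ)) :
    1 - ρ ≤
      ∑ ω : (Fin Q → V) × (S → Fin R → V),
        (if
            |(∑ v, ((Q : ℝ)⁻¹ * ((Finset.univ.filter (fun q => ω.1 q = v)).card : ℝ)) *
                ∑ y, σ y * ((R : ℝ)⁻¹ * ((Finset.univ.filter (fun r => ω.2 y r = v)).card : ℝ)))
              - ∑ v, p v * ∑ y, σ y * py y v| ≤ ξ * k / n
          then (1:ℝ) else 0) *
        ((∏ q, p (ω.1 q)) * ∏ y, ∏ r, py y (ω.2 y r)) := by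
  classical
  have hs : (0 : ℝ) < Fintype.card S := by exact_mod_cast Fintype.card_pos
  have hQ0 : (0 : ℝ) < Q := by exact_mod_cast hQ
  have hR0 : (0 : ℝ) < R := by exact_mod_cast hR
  have hT : ∀ v, ∑ y, py y v = Fintype.card S * pS v := by
    intro v; rw [hpS]; field_simp
  have hpS0 : ∀ v, 0 ≤ pS v := by
    intro v; rw [hpS]; exact mul_nonneg (by positivity) (Finset.sum_nonneg fun y _ => hpy0 y v)
  set g : V → ℝ := fun v => ∑ y, σ y * py y v with hg
  set m : ℝ := ∑ v, p v * g v with hm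
  set ph : (Fin Q → V) → V → ℝ := fun x v =>
    (Q : ℝ)⁻¹ * ((Finset.univ.filter (fun q => x q = v)).card : ℝ) with hph
  set P1 : (Fin Q → V) → ℝ := fun x => ∏ q, p (x q) with hP1
  set P2 : (S → Fin R → V) → ℝ := fun x => ∏ y, ∏ r, py y (x y r) with hP2
  set Z : (Fin Q → V) → (S → Fin R → V) → ℝ := fun x x' =>
    ∑ v, ph x v * ∑ y, σ y * ((R : ℝ)⁻¹ *
      ((Finset.univ.filter (fun r => x' y r = v)).card : ℝ)) with hZ
  have hP10 : ∀ x, 0 ≤ P1 x := fun x => Finset.prod_nonneg fun q _ => hp0 _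
  have hP20 : ∀ x, 0 ≤ P2 x := fun x =>
    Finset.prod_nonneg fun y _ => Finset.prod_nonneg fun r _ => hpy0 _ _
  have hP1s : ∑ x, P1 x = 1 := exp_one (fun _ : Fin Q => p) (fun _ => hp1)
  have hP2s : ∑ x, P2 x = 1 := by
    rw [← exp_one (fun i : S × Fin R => py i.1) (fun i => hpy1 i.1)]
    refine Fintype.sum_equiv (Equiv.curry S (Fin R) V).symm _ _ fun ω => ?_
    rw [Fintype.prod_prod_type]
    rfl
  -- second moment
  have hin : ∀ x, ∑ x', P2 x' * (Z x x' - m) ^ 2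
      ≤ (∑ v, ph x v * g v - m) ^ 2
        + (R : ℝ)⁻¹ * ∑ v, (Fintype.card S * pS v) * ph x v ^ 2 := by
    intro x
    have := inner_bound py hpy1 σ hσ R hR (ph x) m
    simpa only [hT] using this
  have hA : ∑ x, P1 x * (∑ v, ph x v * g v - m) ^ 2 ≤ (Q : ℝ)⁻¹ * ∑ v, p v * g v ^ 2 := by
    have h := exp_sq (fun _ : Fin Q => p) (fun _ => hp1) (fun _ v => (Q : ℝ)⁻¹ * g v) m
    have r1 : ∑ _i : Fin Q, ∑ v, p v * ((Q : ℝ)⁻¹ * g v) = m := by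
      simp only [Finset.sum_const, Finset.card_univ, Fintype.card_fin, nsmul_eq_mul,
        Finset.mul_sum, hm]
      refine Finset.sum_congr rfl fun v _ => ?_
      field_simp
    have r2 : ∑ _i : Fin Q, ∑ v, p v * ((Q : ℝ)⁻¹ * g v) ^ 2
        = (Q : ℝ)⁻¹ * ∑ v, p v * g v ^ 2 := by
      simp only [Finset.sum_const, Finset.card_univ, Fintype.card_fin, nsmul_eq_mul,
        Finset.mul_sum]
      refine Finset.sum_congr rfl fun v _ => ?_
      field_simp
    rw [r1, r2] at h
    have e : ∀ x, ∑ v, ph x v * g v = ∑ q, (Q : ℝ)⁻¹ * g (x q) := fun x => emp_sum x g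
    simp only [e]
    simpa using h
  have hB : ∀ v, ∑ x, P1 x * ph x v ^ 2 ≤ p v ^ 2 + (Q : ℝ)⁻¹ * p v := by
    intro v
    have h := exp_sq (fun _ : Fin Q => p) (fun _ => hp1)
      (fun _ u => (Q : ℝ)⁻¹ * (if v = u then 1 else 0)) 0
    have e : ∀ x, ph x v = ∑ q, (Q : ℝ)⁻¹ * (if v = x q then 1 else 0) := by
      intro x
      rw [← emp_sum x (fun u => if v = u then 1 else 0)]
      simp [hph]
    have r1 : ∑ _i : Fin Q, ∑ u, p u * ((Q : ℝ)⁻¹ * (if v = u then 1 else 0)) = p v := by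
      simp; field_simp
    have r2 : ∑ _i : Fin Q, ∑ u, p u * ((Q : ℝ)⁻¹ * (if v = u then 1 else 0)) ^ 2
        = (Q : ℝ)⁻¹ * p v := by
      simp; field_simp
    rw [r1, r2] at h
    simp only [e]
    simpa using h
  have hg2 : ∑ v, p v * g v ^ 2 ≤ γ * k ^ 2 / n ^ 2 := by
    have hgv : ∀ v, g v ^ 2 ≤ (Fintype.card S * pS v) ^ 2 := by
      intro v
      rw [← hT]
      refine sq_le_sq' ?_ ?_
      · rw [← Finset.sum_neg_distrib]
        refine Finset.sum_le_sum fun y _ => ?_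
        have := hpy0 y v
        rcases hσ y with h | h <;> rw [h] <;> linarith
      · refine Finset.sum_le_sum fun y _ => ?_
        have := hpy0 y v
        rcases hσ y with h | h <;> rw [h] <;> linarith
    calc ∑ v, p v * g v ^ 2 ≤ ∑ v, (Fintype.card S : ℝ) ^ 2 * (p v * pS v ^ 2) := by
          refine Finset.sum_le_sum fun v _ => ?_
          have := mul_le_mul_of_nonneg_left (hgv v) (hp0 v)
          nlinarith
      _ = (Fintype.card S : ℝ) ^ 2 * ∑ v, p v * pS v ^ 2 := by rw [Finset.mul_sum]
      _ ≤ (Fintype.card S : ℝ) ^ 2 * (γ * k ^ 2 / (n ^ 2 * (Fintype.card S : ℝ) ^ 2)) := by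
          gcongr
      _ = γ * k ^ 2 / n ^ 2 := by field_simp
  have hC : ∑ x, P1 x * ∑ v, (Fintype.card S * pS v) * ph x v ^ 2
      ≤ γ * k ^ 2 / n ^ 2 + (Q : ℝ)⁻¹ * (β * k / n) := by
    calc ∑ x, P1 x * ∑ v, (Fintype.card S * pS v) * ph x v ^ 2
        = ∑ v, (Fintype.card S * pS v) * ∑ x, P1 x * ph x v ^ 2 := by
          simp only [Finset.mul_sum]
          rw [Finset.sum_comm]
          refine Finset.sum_congr rfl fun v _ => Finset.sum_congr rfl fun y _ => ?_
          ring
      _ ≤ ∑ v, (Fintype.card S * pS v) * (p v ^ 2 + (Q : ℝ)⁻¹ * p v) := by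
          refine Finset.sum_le_sum fun v _ => ?_
          exact mul_le_mul_of_nonneg_left (hB v) (mul_nonneg hs.le (hpS0 v))
      _ = Fintype.card S * ∑ v, p v ^ 2 * pS v
          + (Q : ℝ)⁻¹ * (Fintype.card S * ∑ v, p v * pS v) := by
          simp only [Finset.mul_sum, ← Finset.sum_add_distrib]
          refine Finset.sum_congr rfl fun v _ => ?_
          ring
      _ ≤ Fintype.card S * (γ * k ^ 2 / (n ^ 2 * Fintype.card S))
          + (Q : ℝ)⁻¹ * (Fintype.card S * (β * k / (n * Fintype.card S))) := by
          gcongr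
      _ = _ := by field_simp
  have hE : ∑ x, P1 x * ∑ x', P2 x' * (Z x x' - m) ^ 2 ≤ ρ * (ξ * k / n) ^ 2 := by
    have s1 : ∑ x, P1 x * ∑ x', P2 x' * (Z x x' - m) ^ 2
        ≤ (Q : ℝ)⁻¹ * (γ * k ^ 2 / n ^ 2)
          + (R : ℝ)⁻¹ * (γ * k ^ 2 / n ^ 2 + (Q : ℝ)⁻¹ * (β * k / n)) := by
      calc _ ≤ ∑ x, P1 x * ((∑ v, ph x v * g v - m) ^ 2
            + (R : ℝ)⁻¹ * ∑ v, (Fintype.card S * pS v) * ph x v ^ 2) :=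
            Finset.sum_le_sum fun x _ => mul_le_mul_of_nonneg_left (hin x) (hP10 x)
        _ = ∑ x, P1 x * (∑ v, ph x v * g v - m) ^ 2
            + (R : ℝ)⁻¹ * ∑ x, P1 x * ∑ v, (Fintype.card S * pS v) * ph x v ^ 2 := by
            rw [Finset.mul_sum, ← Finset.sum_add_distrib]
            refine Finset.sum_congr rfl fun x _ => ?_
            ring
        _ ≤ _ := by
            refine add_le_add (hA.trans ?_) ?_
            · gcongr
            · gcongr
    have hρξ : 0 < ρ * ξ ^ 2 := by positivity
    have q1 : (Q : ℝ)⁻¹ * γ ≤ ρ * ξ ^ 2 / 7 := by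
      rw [div_le_iff₀ hρξ] at hQ'
      rw [inv_mul_le_iff₀ hQ0]
      nlinarith [sq_nonneg β]
    have q2 : (R : ℝ)⁻¹ * γ ≤ ρ * ξ ^ 2 / 7 := by
      rw [div_le_iff₀ hρξ] at hR'
      rw [inv_mul_le_iff₀ hR0]
      nlinarith [sq_nonneg β]
    have q3 : (R : ℝ)⁻¹ * (Q : ℝ)⁻¹ * β ≤ ρ * ξ ^ 2 / 7 * (k / n) := by
      have e : 7 * β / (ρ * ξ ^ 2) * (n / k) = β / (ρ * ξ ^ 2 / 7 * (k / n)) := by field_simp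
      rw [e, div_le_iff₀ (by positivity)] at hQR
      rw [← mul_inv, inv_mul_le_iff₀ (by positivity)]
      linarith
    have kn : 0 < k / n := by positivity
    have w1 := mul_le_mul_of_nonneg_right q1 (sq_nonneg (k / n))
    have w2 := mul_le_mul_of_nonneg_right q2 (sq_nonneg (k / n))
    have w3 := mul_le_mul_of_nonneg_right q3 kn.le
    have w4 : 0 ≤ ρ * ξ ^ 2 * (k / n) ^ 2 := by positivity
    have e1 : (Q : ℝ)⁻¹ * (γ * k ^ 2 / n ^ 2)
          + (R : ℝ)⁻¹ * (γ * k ^ 2 / n ^ 2 + (Q : ℝ)⁻¹ * (β * k / n))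
        = (Q : ℝ)⁻¹ * γ * (k / n) ^ 2 + (R : ℝ)⁻¹ * γ * (k / n) ^ 2
          + (R : ℝ)⁻¹ * (Q : ℝ)⁻¹ * β * (k / n) := by ring
    have e2 : ρ * (ξ * k / n) ^ 2 = ρ * ξ ^ 2 * (k / n) ^ 2 := by ring
    rw [e1] at s1
    rw [e2]
    have e3 : ρ * ξ ^ 2 / 7 * (k / n) * (k / n) = ρ * ξ ^ 2 * (k / n) ^ 2 / 7 := by ring
    have e4 : ρ * ξ ^ 2 / 7 * (k / n) ^ 2 = ρ * ξ ^ 2 * (k / n) ^ 2 / 7 := by ring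
    rw [e3] at w3
    rw [e4] at w1 w2
    refine s1.trans ((add_le_add (add_le_add w1 w2) w3).trans ?_)
    clear * - w4
    linarith
  -- Chebyshev
  have ht : 0 < ξ * k / n := by positivity
  set t : ℝ := ξ * k / n with htd
  rw [Fintype.sum_prod_type]
  change 1 - ρ ≤ ∑ x, ∑ x', (if |Z x x' - m| ≤ t then (1:ℝ) else 0) * (P1 x * P2 x')
  clear hin hA hB hC hg2
  clear_value Z P1 P2 ph m t
  have pt : ∀ x x', (1 - (Z x x' - m) ^ 2 / t ^ 2) * (P1 x * P2 x')
      ≤ (if |Z x x' - m| ≤ t then (1:ℝ) else 0) * (P1 x * P2 x') := by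
    intro x x'
    refine mul_le_mul_of_nonneg_right ?_ (mul_nonneg (hP10 x) (hP20 x'))
    split_ifs with h
    · have : 0 ≤ (Z x x' - m) ^ 2 / t ^ 2 := by positivity
      linarith
    · push Not at h
      have : t ^ 2 ≤ (Z x x' - m) ^ 2 := by
        rw [← sq_abs (Z x x' - m)]; gcongr
      have := (one_le_div (by positivity : 0 < t ^ 2)).2 this
      linarith
  refine le_trans ?_ (Finset.sum_le_sum fun x _ => Finset.sum_le_sum fun x' _ => pt x x')
  have e : ∑ x, ∑ x', (1 - (Z x x' - m) ^ 2 / t ^ 2) * (P1 x * P2 x')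
      = 1 - (∑ x, P1 x * ∑ x', P2 x' * (Z x x' - m) ^ 2) / t ^ 2 := by
    have e1 : ∀ x x', (1 - (Z x x' - m) ^ 2 / t ^ 2) * (P1 x * P2 x')
        = P1 x * P2 x' - P1 x * (P2 x' * (Z x x' - m) ^ 2) / t ^ 2 := by
      intro x x'; ring
    simp only [e1, Finset.sum_sub_distrib, ← Finset.mul_sum, ← Finset.sum_div, hP2s, hP1s,
      mul_one]
  rw [e]
  have : (∑ x, P1 x * ∑ x', P2 x' * (Z x x' - m) ^ 2) / t ^ 2 ≤ ρ := by
    rw [div_le_iff₀ (by positivity)]; exact hE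
  linarith
end

section
/- For every real ε ∈ (0,1), every integer t ≥ 1, and every real x ∈ [−1,1], the series Σ_{v=1}^{∞} c_{v,ε,t}·T_v(x) converges absolutely and (1 − ε·x)^{−t} = c_{0,ε,t}/2 + Σ_{v=1}^{∞} c_{v,ε,t}·T_v(x). -/
open Polynomial.Chebyshev in
lemma cheb_pow_aux (x : ℝ) (n : ℕ) :
    (2 * x) ^ n = ∑ k ∈ Finset.range (n + 1),
      (n.choose k : ℝ) * (T ℝ ((n : ℤ) - 2 * k)).eval x := by
  induction n with
  | zero => simp
  | succ n ih =>
    have hrec : ∀ m : ℤ, 2 * x * (T ℝ m).eval x = (T ℝ (m + 1)).eval x + (T ℝ (m - 1)).eval x := by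
      intro m
      have h := congrArg (Polynomial.eval x) (T_add_one ℝ m)
      simp at h
      linarith
    rw [pow_succ, ih, Finset.sum_mul]
    have e1 : ∀ k ∈ Finset.range (n + 1),
        (n.choose k : ℝ) * (T ℝ ((n : ℤ) - 2 * k)).eval x * (2 * x) =
        (n.choose k : ℝ) * (T ℝ (((n + 1 : ℕ) : ℤ) - 2 * k)).eval x +
        (n.choose k : ℝ) * (T ℝ (((n + 1 : ℕ) : ℤ) - 2 * ((k + 1 : ℕ) : ℤ))).eval x := by
      intro k _
      have h := hrec ((n : ℤ) - 2 * k)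
      have h1 : (n : ℤ) - 2 * k + 1 = ((n + 1 : ℕ) : ℤ) - 2 * k := by push_cast; ring
      have h2 : (n : ℤ) - 2 * k - 1 = ((n + 1 : ℕ) : ℤ) - 2 * ((k + 1 : ℕ) : ℤ) := by
        push_cast; ring
      rw [h1, h2] at h
      rw [← mul_add, ← h]; ring
    rw [Finset.sum_congr rfl e1, Finset.sum_add_distrib]
    rw [Finset.sum_range_succ' _ (n + 1)]
    have e2 : ∑ k ∈ Finset.range (n + 1),
        (n.choose k : ℝ) * (T ℝ (((n + 1 : ℕ) : ℤ) - 2 * k)).eval x =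
        ∑ k ∈ Finset.range (n + 1),
          (n.choose (k + 1) : ℝ) * (T ℝ (((n + 1 : ℕ) : ℤ) - 2 * ((k + 1 : ℕ) : ℤ))).eval x +
        (T ℝ (((n + 1 : ℕ) : ℤ) - 2 * ((0 : ℕ) : ℤ))).eval x := by
      have h := Finset.sum_range_succ (fun k : ℕ =>
        (n.choose k : ℝ) * (T ℝ (((n + 1 : ℕ) : ℤ) - 2 * k)).eval x) (n + 1)
      rw [Finset.sum_range_succ'] at h
      simp only [Nat.choose_succ_self, Nat.choose_zero_right, Nat.cast_zero, zero_mul, add_zero,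
        Nat.cast_one, one_mul] at h ⊢
      exact h.symm
    rw [e2, add_right_comm, ← Finset.sum_add_distrib]
    congr 1
    · refine Finset.sum_congr rfl fun k _ => ?_
      rw [Nat.choose_succ_succ]; push_cast; ring
    · simp

/-- Weight of the `v`-th Chebyshev polynomial. -/
noncomputable def chebW (v : ℕ) : ℝ := if v = 0 then 1 else 2

lemma cheb_fiber (n v : ℕ) (hv : v ∈ Finset.range (n + 1)) :
    ∑ k ∈ (Finset.range (n + 1)).filter (fun k : ℕ => ((n : ℤ) - 2 * k).natAbs = v),
      (n.choose k : ℝ) =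
    chebW v * (if v ≤ n ∧ Even (n - v) then (n.choose ((n - v) / 2) : ℝ) else 0) := by
  rw [Finset.mem_range] at hv
  split_ifs with h
  · obtain ⟨h1, j, hj⟩ := h
    have hn : n = v + 2 * j := by omega
    have hd : (n - v) / 2 = j := by omega
    rw [hd]
    unfold chebW
    split_ifs with h0
    · have : (Finset.range (n + 1)).filter (fun k : ℕ => ((n : ℤ) - 2 * k).natAbs = v) = {j} := by
        ext k; simp only [Finset.mem_filter, Finset.mem_range, Finset.mem_singleton]; omega
      rw [this]; simp
    · have : (Finset.range (n + 1)).filter (fun k : ℕ => ((n : ℤ) - 2 * k).natAbs = v)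
          = {j, v + j} := by
        ext k
        simp only [Finset.mem_filter, Finset.mem_range, Finset.mem_singleton, Finset.mem_insert]
        omega
      rw [this, Finset.sum_pair (by omega)]
      have : n.choose (v + j) = n.choose j := Nat.choose_symm_of_eq_add (by omega)
      rw [this]; ring
  · have : (Finset.range (n + 1)).filter (fun k : ℕ => ((n : ℤ) - 2 * k).natAbs = v) = ∅ := by
      ext k
      simp only [Finset.mem_filter, Finset.mem_range, Finset.notMem_empty, iff_false]
      rintro ⟨h1, h2⟩
      exact h ⟨by omega, by rw [Nat.even_iff]; omega⟩
    rw [this]; simp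

open Polynomial.Chebyshev in
lemma cheb_pow (x : ℝ) (n : ℕ) :
    (2 * x) ^ n = ∑ v ∈ Finset.range (n + 1),
      chebW v * (if v ≤ n ∧ Even (n - v) then (n.choose ((n - v) / 2) : ℝ) else 0) *
        (T ℝ v).eval x := by
  rw [cheb_pow_aux]
  rw [← Finset.sum_fiberwise_of_maps_to (t := Finset.range (n + 1))
    (g := fun k : ℕ => ((n : ℤ) - 2 * k).natAbs)
    (by intro k hk; simp only [Finset.mem_range] at *; omega)]
  refine Finset.sum_congr rfl fun v hv => ?_
  rw [← cheb_fiber n v hv, Finset.sum_mul]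
  refine Finset.sum_congr rfl fun k hk => ?_
  rw [← (Finset.mem_filter.1 hk).2, T_natAbs]

/-- The summand in `chebCoeff`. -/
noncomputable def chebTerm (ε : ℝ) (t v n : ℕ) : ℝ :=
  if v ≤ n ∧ Even (n - v) then
      ε ^ n * (2:ℝ)⁻¹ ^ n * (Nat.choose (n - 1 + t) n) * (Nat.choose n ((n - v) / 2)) else 0

open Polynomial.Chebyshev in
lemma cheb_row (ε x : ℝ) (t n : ℕ) :
    HasSum (fun v : ℕ => chebW v * chebTerm ε t v n * (T ℝ v).eval x)
      ((Nat.choose (n - 1 + t) n) * (ε * x) ^ n) := by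
  have h : ((Nat.choose (n - 1 + t) n : ℝ)) * (ε * x) ^ n =
      ∑ v ∈ Finset.range (n + 1), chebW v * chebTerm ε t v n * (T ℝ v).eval x := by
    have h1 : (ε * x) ^ n = ε ^ n * (2:ℝ)⁻¹ ^ n * (2 * x) ^ n := by
      rw [← mul_pow, ← mul_pow]; congr 1; ring
    rw [h1, cheb_pow, Finset.mul_sum, Finset.mul_sum]
    refine Finset.sum_congr rfl fun v _ => ?_
    unfold chebTerm
    split_ifs <;> ring
  rw [h]
  refine hasSum_sum_of_ne_finset_zero fun v hv => ?_
  rw [Finset.mem_range] at hv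
  have : ¬ (v ≤ n ∧ Even (n - v)) := fun h => by omega
  simp [chebTerm, this]

lemma cheb_series (t : ℕ) (ht : 1 ≤ t) (r : ℝ) (hr : |r| < 1) :
    HasSum (fun n : ℕ => (Nat.choose (n - 1 + t) n : ℝ) * r ^ n) ((1 - r) ^ (-(t:ℤ))) := by
  obtain ⟨k, rfl⟩ : ∃ k, t = k + 1 := ⟨t - 1, by omega⟩
  have h := hasSum_choose_mul_geometric_of_norm_lt_one k (r := r) (by simpa using hr)
  have e : (1 - r) ^ (-((k + 1 : ℕ):ℤ)) = 1 / (1 - r) ^ (k + 1) := by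
    rw [zpow_neg, zpow_natCast, one_div]
  rw [e]
  have hf : (fun n : ℕ => (Nat.choose (n - 1 + (k + 1)) n : ℝ) * r ^ n) =
      fun n : ℕ => ((n + k).choose k : ℝ) * r ^ n := by
    funext n
    congr 2
    rcases n with _ | n
    · simp
    · have : n + 1 - 1 + (k + 1) = (n + 1) + k := by omega
      rw [this, Nat.choose_symm_add]
  rw [hf]
  exact h

/-- For `ε ∈ (0,1)`, `t ≥ 1` and `x ∈ [-1,1]`, the Chebyshev series
`c_0/2 + ∑_{v ≥ 1} c_v T_v(x)` converges absolutely to `(1 - εx)^{-t}`. -/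
theorem stmt_12 (ε : ℝ) (hε : ε ∈ Set.Ioo (0:ℝ) 1) (t : ℕ) (ht : 1 ≤ t)
    (x : ℝ) (hx : x ∈ Set.Icc (-1:ℝ) 1) :
    Summable (fun v : ℕ =>
      |chebCoeff ε t (v + 1) * (Polynomial.Chebyshev.T ℝ (v + 1)).eval x|) ∧
    (1 - ε * x) ^ (-(t:ℤ)) =
      chebCoeff ε t 0 / 2 +
        ∑' v : ℕ, chebCoeff ε t (v + 1) * (Polynomial.Chebyshev.T ℝ (v + 1)).eval x := by
  obtain ⟨h0, h1⟩ := hε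
  have hw : ∀ v, 0 ≤ chebW v := fun v => by unfold chebW; split_ifs <;> norm_num
  have hterm : ∀ v n, 0 ≤ chebTerm ε t v n := fun v n => by
    unfold chebTerm; split_ifs <;> positivity
  have hrow1 : ∀ n, HasSum (fun v : ℕ => chebW v * chebTerm ε t v n)
      ((Nat.choose (n - 1 + t) n) * ε ^ n) := fun n => by
    simpa using cheb_row ε 1 t n
  have hser1 := cheb_series t ht ε (by rw [abs_of_pos h0]; exact h1)
  have hxabs : |x| ≤ 1 := abs_le.2 hx
  have hser := cheb_series t ht (ε * x) (by
    rw [abs_mul, abs_of_pos h0]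
    calc ε * |x| ≤ ε * 1 := by gcongr
      _ < 1 := by linarith)
  have hT : ∀ v : ℕ, |(Polynomial.Chebyshev.T ℝ v).eval x| ≤ 1 := fun v => by
    rw [← Real.cos_arccos hx.1 hx.2, Polynomial.Chebyshev.T_real_cos]
    exact Real.abs_cos_le_one _
  -- joint summability
  have hS1 : Summable (fun p : ℕ × ℕ => chebW p.2 * chebTerm ε t p.2 p.1) := by
    rw [summable_prod_of_nonneg (fun p => mul_nonneg (hw _) (hterm _ _))]
    refine ⟨fun n => (hrow1 n).summable, ?_⟩
    simpa only [(hrow1 _).tsum_eq] using hser1.summable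
  have hS : Summable (fun p : ℕ × ℕ => chebW p.2 * chebTerm ε t p.2 p.1 *
      (Polynomial.Chebyshev.T ℝ p.2).eval x) := by
    refine Summable.of_norm_bounded hS1 fun p => ?_
    rw [Real.norm_eq_abs, abs_mul, abs_of_nonneg (mul_nonneg (hw _) (hterm _ _))]
    exact mul_le_of_le_one_right (mul_nonneg (hw _) (hterm _ _)) (hT _)
  have hS' := hS.prod_symm
  have hcol : ∀ v : ℕ, ∑' n, chebW v * chebTerm ε t v n *
      (Polynomial.Chebyshev.T ℝ v).eval x =
      chebW v / 2 * chebCoeff ε t v * (Polynomial.Chebyshev.T ℝ v).eval x := fun v => by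
    rw [tsum_mul_right, tsum_mul_left]
    have : chebCoeff ε t v = 2 * ∑' n, chebTerm ε t v n := rfl
    rw [this]; ring
  have hsumv : Summable (fun v : ℕ => chebW v / 2 * chebCoeff ε t v *
      (Polynomial.Chebyshev.T ℝ v).eval x) := by
    simpa only [Prod.swap, hcol] using hS'.prod
  have hkey : (1 - ε * x) ^ (-(t:ℤ)) = ∑' v : ℕ, chebW v / 2 * chebCoeff ε t v *
      (Polynomial.Chebyshev.T ℝ v).eval x := by
    rw [← hser.tsum_eq]
    simp only [← hcol]
    rw [Summable.tsum_comm hS]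
    exact tsum_congr fun n => ((cheb_row ε x t n).tsum_eq).symm
  have hshift : ∀ v : ℕ, chebW (v + 1) / 2 * chebCoeff ε t (v + 1) *
      (Polynomial.Chebyshev.T ℝ ((v + 1 : ℕ) : ℤ)).eval x =
      chebCoeff ε t (v + 1) * (Polynomial.Chebyshev.T ℝ (v + 1)).eval x := fun v => by
    simp [chebW]
  constructor
  · have := ((summable_nat_add_iff 1).2 hsumv).abs
    simpa only [hshift] using this
  · rw [hkey, hsumv.tsum_eq_zero_add]
    simp only [hshift]
    congr 1
    simp [chebW]; ring
end

section
/- For every natural number ℓ, every coefficient (in the standard monomial basis) of the Chebyshev polynomial of the first kind T_ℓ has absolute value at most (1 + √2)^ℓ. -/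
theorem stmt_13_aux (n : ℕ) : ∀ i : ℕ,
    |(Polynomial.Chebyshev.T ℝ (n : ℤ)).coeff i| ≤ (1 + Real.sqrt 2) ^ n := by
  have hs : Real.sqrt 2 ^ 2 = 2 := Real.sq_sqrt (by norm_num)
  have h0 : 0 ≤ Real.sqrt 2 := Real.sqrt_nonneg 2
  induction n using Nat.twoStepInduction with
  | zero =>
    intro i
    simp only [Nat.cast_zero, Polynomial.Chebyshev.T_zero, Polynomial.coeff_one, pow_zero]
    split_ifs <;> simp
  | one =>
    intro i
    simp only [Nat.cast_one, Polynomial.Chebyshev.T_one, Polynomial.coeff_X, pow_one]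
    split_ifs
    · rw [abs_one]; linarith
    · rw [abs_zero]; linarith
  | more n ih0 ih1 =>
    intro i
    have e : ((n + 2 : ℕ) : ℤ) = (n : ℤ) + 2 := by push_cast; ring
    have e1 : ((n + 1 : ℕ) : ℤ) = (n : ℤ) + 1 := by push_cast; ring
    rw [e1] at ih1
    have hr : (1 + Real.sqrt 2) ^ (n + 2)
        = 2 * (1 + Real.sqrt 2) ^ (n + 1) + (1 + Real.sqrt 2) ^ n := by
      have : (1 + Real.sqrt 2) ^ 2 = 2 * (1 + Real.sqrt 2) + 1 := by nlinarith
      rw [pow_add, this]; ring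
    have e2 : Polynomial.Chebyshev.T ℝ ((n : ℤ) + 2)
        = Polynomial.C 2 * (Polynomial.X * Polynomial.Chebyshev.T ℝ ((n : ℤ) + 1))
          - Polynomial.Chebyshev.T ℝ (n : ℤ) := by
      rw [Polynomial.Chebyshev.T_add_two, mul_assoc]; rfl
    have hp : 0 ≤ (1 + Real.sqrt 2) ^ (n + 1) := by positivity
    rw [e, e2, hr, Polynomial.coeff_sub, Polynomial.coeff_C_mul]
    have a := abs_le.mp (ih0 i)
    cases i with
    | zero =>
      rw [Polynomial.coeff_X_mul_zero, abs_le]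
      constructor <;> linarith [a.1, a.2]
    | succ j =>
      have b := abs_le.mp (ih1 j)
      rw [Polynomial.coeff_X_mul, abs_le]
      constructor <;> linarith [a.1, a.2, b.1, b.2]

/-- Every coefficient of the Chebyshev polynomial of the first kind `T_ℓ`
has absolute value at most `(1 + √2)^ℓ`. -/
theorem stmt_13 (ℓ : ℕ) (i : ℕ) :
    |(Polynomial.Chebyshev.T ℝ ℓ).coeff i| ≤ (1 + Real.sqrt 2) ^ ℓ := by
  exact stmt_13_aux ℓ i
end

section
/- There exists an absolute constant C > 0 such that for every integer t ≥ 2, every real ε ∈ (0, 1/10], and every integer d ≥ 10·ε·t, every coefficient (in the standard monomial basis) of the polynomial P(X) := c_{0,ε,t}/2 + Σ_{v=1}^{d} c_{v,ε,t}·T_v(X) has absolute value at most 2^{C·(d+1)}. -/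
theorem chebT_coeff_bound (v : ℕ) : (∀ i : ℕ, |(Polynomial.Chebyshev.T ℝ (v:ℤ)).coeff i| ≤ 3 ^ v) ∧
    (∀ i : ℕ, |(Polynomial.Chebyshev.T ℝ ((v + 1 : ℕ):ℤ)).coeff i| ≤ 3 ^ (v + 1)) := by
  induction v with
  | zero =>
    constructor
    · intro i
      simp only [Nat.cast_zero, Polynomial.Chebyshev.T_zero, Polynomial.coeff_one]
      split_ifs <;> norm_num
    · intro i
      simp only [zero_add, Nat.cast_one, Polynomial.Chebyshev.T_one, Polynomial.coeff_X]
      split_ifs <;> norm_num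
  | succ v ih =>
    refine ⟨ih.2, fun i => ?_⟩
    have e : ((v + 1 + 1 : ℕ) : ℤ) = (v : ℤ) + 2 := by push_cast; ring
    have h2 := ih.2
    have e' : ((v + 1 : ℕ) : ℤ) = (v : ℤ) + 1 := by push_cast; ring
    rw [e'] at h2
    rw [e, Polynomial.Chebyshev.T_add_two, Polynomial.coeff_sub, mul_assoc]
    have h3 : |((2 : Polynomial ℝ) * (Polynomial.X * Polynomial.Chebyshev.T ℝ ((v : ℤ) + 1))).coeff i|
        ≤ 2 * 3 ^ (v + 1) := by
      rw [show (2 : Polynomial ℝ) = Polynomial.C 2 from rfl, Polynomial.coeff_C_mul, abs_mul]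
      rw [abs_of_pos (by norm_num : (0:ℝ) < 2)]
      apply mul_le_mul_of_nonneg_left _ (by norm_num)
      cases i with
      | zero => simp
      | succ i => rw [Polynomial.coeff_X_mul]; exact h2 i
    have h1 := ih.1 i
    have hp : (0:ℝ) < 3 ^ v := by positivity
    calc _ ≤ _ := abs_sub _ _
      _ ≤ 2 * 3 ^ (v + 1) + 3 ^ v := add_le_add h3 h1
      _ ≤ 3 ^ (v + 1 + 1) := by rw [pow_succ, pow_succ, pow_succ]; linarith

theorem chebCoeff_nonneg' (ε : ℝ) (h0 : 0 < ε) (t v : ℕ) : 0 ≤ chebCoeff ε t v := by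
  unfold chebCoeff
  refine mul_nonneg (by norm_num) (tsum_nonneg fun n => ?_)
  split_ifs <;> positivity

theorem chebCoeff_le' (ε : ℝ) (h0 : 0 < ε) (h1 : ε ≤ 1/10) (t v d : ℕ) (ht : 2 ≤ t)
    (hd : 10 * ε * t ≤ (d:ℝ)) : chebCoeff ε t v ≤ 2 * 4 ^ d := by
  unfold chebCoeff
  refine mul_le_mul_of_nonneg_left ?_ (by norm_num)
  obtain ⟨k, rfl⟩ : ∃ k, t = k + 1 := ⟨t - 1, by omega⟩
  have hn : ‖ε‖ < 1 := by rw [Real.norm_of_nonneg h0.le]; linarith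
  have hs := hasSum_choose_mul_geometric_of_norm_lt_one k hn
  have key : ∀ n : ℕ, (if v ≤ n ∧ Even (n - v) then
      ε ^ n * (2:ℝ)⁻¹ ^ n * (Nat.choose (n - 1 + (k + 1)) n) * (Nat.choose n ((n - v) / 2)) else 0)
      ≤ ((n + k).choose k : ℝ) * ε ^ n := by
    intro n
    split_ifs
    · have a : Nat.choose (n - 1 + (k + 1)) n = (n + k).choose k := by
        rcases n with _ | n
        · simp
        · rw [show n + 1 - 1 + (k + 1) = n + 1 + k by omega, Nat.choose_symm_add]
      have b : (Nat.choose n ((n - v) / 2) : ℝ) ≤ 2 ^ n := by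
        exact_mod_cast Nat.choose_le_two_pow n _
      rw [a]
      have c : (2:ℝ)⁻¹ ^ n * 2 ^ n = 1 := by rw [← mul_pow]; norm_num
      calc _ ≤ ε ^ n * (2:ℝ)⁻¹ ^ n * ((n + k).choose k : ℝ) * 2 ^ n :=
            mul_le_mul_of_nonneg_left b (by positivity)
        _ = ((n + k).choose k : ℝ) * ε ^ n * ((2:ℝ)⁻¹ ^ n * 2 ^ n) := by ring
        _ = _ := by rw [c, mul_one]
    · positivity
  have hsum : Summable (fun n : ℕ => if v ≤ n ∧ Even (n - v) then
      ε ^ n * (2:ℝ)⁻¹ ^ n * (Nat.choose (n - 1 + (k + 1)) n) * (Nat.choose n ((n - v) / 2)) else 0) :=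
    Summable.of_nonneg_of_le (fun n => by split_ifs <;> positivity) key hs.summable
  refine (hsum.tsum_le_tsum key hs.summable).trans ?_
  rw [hs.tsum_eq]
  have e1 : 1 / (1 - ε) ≤ Real.exp (2 * ε) := by
    refine le_trans ?_ (Real.add_one_le_exp _)
    rw [div_le_iff₀ (by linarith)]
    nlinarith
  have e2 : Real.exp 1 ≤ 4 := by linarith [Real.exp_one_lt_d9]
  calc 1 / (1 - ε) ^ (k + 1) = (1 / (1 - ε)) ^ (k + 1) := by rw [div_pow, one_pow]
    _ ≤ Real.exp (2 * ε) ^ (k + 1) :=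
        pow_le_pow_left₀ (div_nonneg zero_le_one (by linarith)) e1 _
    _ = Real.exp (((k + 1 : ℕ) : ℝ) * (2 * ε)) := (Real.exp_nat_mul _ _).symm
    _ ≤ Real.exp ((d:ℝ) * 1) := by
        apply Real.exp_le_exp.mpr
        have : 0 ≤ ε * ((k + 1 : ℕ) : ℝ) := by positivity
        nlinarith
    _ = Real.exp 1 ^ d := Real.exp_nat_mul _ _
    _ ≤ 4 ^ d := pow_le_pow_left₀ (Real.exp_pos 1).le e2 _

theorem sum_three_bound (d : ℕ) : 1 + ∑ v ∈ Finset.Icc 1 d, (3:ℝ) ^ v ≤ 3 ^ (d + 1) := by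
  induction d with
  | zero => simp
  | succ d ih =>
    rw [Finset.sum_Icc_succ_top (by omega)]
    have : (0:ℝ) < 3 ^ (d + 1) := by positivity
    rw [pow_succ 3 (d + 1)]
    linarith


/-- Every coefficient of the truncated Chebyshev expansion
`P(X) = c_0/2 + ∑_{v=1}^d c_v T_v(X)` of `(1 - εX)^{-t}` has absolute value at most
`2^{C·(d+1)}`. -/
theorem stmt_15 :
    ∃ C : ℝ, 0 < C ∧
    ∀ t : ℕ, 2 ≤ t → ∀ ε : ℝ, ε ∈ Set.Ioc (0:ℝ) (1/10) →
    ∀ d : ℕ, 10 * ε * t ≤ (d : ℝ) → ∀ i : ℕ,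
      |(Polynomial.C (chebCoeff ε t 0 / 2) +
          ∑ v ∈ Finset.Icc 1 d,
            Polynomial.C (chebCoeff ε t v) * Polynomial.Chebyshev.T ℝ v).coeff i|
        ≤ (2:ℝ) ^ (C * ((d : ℝ) + 1)) := by
  refine ⟨4, by norm_num, ?_⟩
  rintro t ht ε ⟨h0, h1⟩ d hd i
  have hb : ∀ v : ℕ, |chebCoeff ε t v| ≤ 2 * 4 ^ d := fun v => by
    rw [abs_of_nonneg (chebCoeff_nonneg' ε h0 t v)]
    exact chebCoeff_le' ε h0 h1 t v d ht hd
  have hA : |(Polynomial.C (chebCoeff ε t 0 / 2)).coeff i| ≤ 2 * 4 ^ d := by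
    rw [Polynomial.coeff_C]
    split_ifs
    · rw [abs_div, abs_of_pos (by norm_num : (0:ℝ) < 2)]
      have := hb 0
      have := abs_nonneg (chebCoeff ε t 0)
      linarith
    · simp
  have hB : |(∑ v ∈ Finset.Icc 1 d,
      Polynomial.C (chebCoeff ε t v) * Polynomial.Chebyshev.T ℝ v).coeff i|
      ≤ ∑ v ∈ Finset.Icc 1 d, (2 * 4 ^ d) * (3:ℝ) ^ v := by
    rw [Polynomial.finsetSum_coeff]
    refine (Finset.abs_sum_le_sum_abs _ _).trans (Finset.sum_le_sum fun v _ => ?_)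
    rw [Polynomial.coeff_C_mul, abs_mul]
    exact mul_le_mul (hb v) ((chebT_coeff_bound v).1 i) (abs_nonneg _) (by positivity)
  rw [Polynomial.coeff_add]
  have hR : (2:ℝ) ^ ((4:ℝ) * ((d : ℝ) + 1)) = 4 ^ (d + 1) * 4 ^ (d + 1) := by
    rw [show (4:ℝ) * ((d : ℝ) + 1) = ((4 * (d + 1) : ℕ) : ℝ) by push_cast; ring,
      Real.rpow_natCast, pow_mul, ← mul_pow]
    norm_num
  rw [hR]
  calc _ ≤ _ := abs_add_le _ _
    _ ≤ 2 * 4 ^ d + ∑ v ∈ Finset.Icc 1 d, (2 * 4 ^ d) * (3:ℝ) ^ v := add_le_add hA hB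
    _ = 2 * 4 ^ d * (1 + ∑ v ∈ Finset.Icc 1 d, (3:ℝ) ^ v) := by rw [← Finset.mul_sum]; ring
    _ ≤ 2 * 4 ^ d * 3 ^ (d + 1) :=
        mul_le_mul_of_nonneg_left (sum_three_bound d) (by positivity)
    _ ≤ 4 ^ (d + 1) * 4 ^ (d + 1) := by
        refine mul_le_mul ?_ (pow_le_pow_left₀ (by norm_num) (by norm_num) _)
          (by positivity) (by positivity)
        have : (0:ℝ) < 4 ^ d := by positivity
        rw [pow_succ]; linarith
end

section
/- Let ε ∈ (0, 1/10] be real, let t ≥ 1 be an integer, and let v ≥ 0 be real, and let F and n₀ be as defined in the context. Then: (1) F(n) ≤ F(n₀) for every real n > v; and (2) F(n₀ + z) ≤ F(n₀) − (log 2 / 4)·z for every real z ≥ 2·n₀. -/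
/-- The function `F(n) = -n log(1/ε) - n log 2 + (n+t) log(n+t) - t log t
- ((n-v)/2) log((n-v)/2) - ((n+v)/2) log((n+v)/2)`. -/
noncomputable def Ffun (ε : ℝ) (t : ℕ) (v : ℝ) (n : ℝ) : ℝ :=
  -n * Real.log (1 / ε) - n * Real.log 2 + (n + t) * Real.log (n + t)
    - t * Real.log t - (n - v) / 2 * Real.log ((n - v) / 2)
    - (n + v) / 2 * Real.log ((n + v) / 2)

/-- The maximizer `n₀ = (tε² + √(ε²t² + v²(1-ε²)))/(1-ε²)` of `F`. -/
noncomputable def nZero (ε : ℝ) (t : ℕ) (v : ℝ) : ℝ :=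
  (t * ε ^ 2 + Real.sqrt (ε ^ 2 * t ^ 2 + v ^ 2 * (1 - ε ^ 2))) / (1 - ε ^ 2)

theorem Ffun_hasDerivAt (ε : ℝ) (h0 : 0 < ε) (t : ℕ) (ht : 1 ≤ t) (v : ℝ) (hv : 0 ≤ v)
    (n : ℝ) (hn : v < n) :
    HasDerivAt (Ffun ε t v)
      ((Real.log (ε ^ 2 * (n + t) ^ 2) - Real.log (n ^ 2 - v ^ 2)) / 2) n := by
  have ht' : (1:ℝ) ≤ t := by exact_mod_cast ht
  have h1 : HasDerivAt (fun x : ℝ => x) 1 n := hasDerivAt_id n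
  have hA : n + t ≠ 0 := by linarith
  have hB : (n - v) / 2 ≠ 0 := by linarith
  have hC : (n + v) / 2 ≠ 0 := by linarith
  have dA := (Real.hasDerivAt_mul_log hA).comp n (h1.add_const (t:ℝ))
  have dB := (Real.hasDerivAt_mul_log hB).comp n ((h1.sub_const v).div_const 2)
  have dC := (Real.hasDerivAt_mul_log hC).comp n ((h1.add_const v).div_const 2)
  have d := (((((h1.neg.mul_const (Real.log (1/ε))).sub (h1.mul_const (Real.log 2))).add dA).sub_const
    (t * Real.log t)).sub dB).sub dC
  have e : n ^ 2 - v ^ 2 = 2 * 2 * (((n - v) / 2) * ((n + v) / 2)) := by ring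
  have e1 : Real.log (n ^ 2 - v ^ 2)
      = 2 * Real.log 2 + (Real.log ((n - v) / 2) + Real.log ((n + v) / 2)) := by
    rw [e, Real.log_mul (by norm_num) (mul_ne_zero hB hC), Real.log_mul hB hC,
      Real.log_mul (by norm_num) (by norm_num)]
    ring
  have e2 : Real.log (ε ^ 2 * (n + t) ^ 2) = 2 * Real.log ε + 2 * Real.log (n + t) := by
    rw [Real.log_mul (by positivity) (pow_ne_zero 2 hA), Real.log_pow, Real.log_pow]
    push_cast; ring
  have e3 : Real.log (1 / ε) = - Real.log ε := by rw [one_div, Real.log_inv]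
  refine HasDerivAt.congr_deriv (f := Ffun ε t v) d ?_
  rw [e1, e2, e3]
  ring

theorem nZero_spec (ε : ℝ) (h0 : 0 < ε) (h1 : ε ≤ 1 / 10) (t : ℕ) (ht : 1 ≤ t) (v : ℝ)
    (hv : 0 ≤ v) :
    v < nZero ε t v ∧ ε ^ 2 * (nZero ε t v + t) ^ 2 = nZero ε t v ^ 2 - v ^ 2 ∧
      2 * ε ^ 2 * t ≤ (1 - ε ^ 2) * nZero ε t v := by
  have ht' : (1:ℝ) ≤ t := by exact_mod_cast ht
  have hp : 0 < 1 - ε ^ 2 := by nlinarith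
  have hrad : 0 ≤ ε ^ 2 * (t:ℝ) ^ 2 + v ^ 2 * (1 - ε ^ 2) := by positivity
  have hs := Real.sq_sqrt hrad
  have hs1 : ε * t ≤ Real.sqrt (ε ^ 2 * (t:ℝ) ^ 2 + v ^ 2 * (1 - ε ^ 2)) := by
    apply Real.le_sqrt_of_sq_le
    have : 0 ≤ v ^ 2 * (1 - ε ^ 2) := by positivity
    nlinarith
  have hn : (1 - ε ^ 2) * nZero ε t v
      = t * ε ^ 2 + Real.sqrt (ε ^ 2 * t ^ 2 + v ^ 2 * (1 - ε ^ 2)) := by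
    unfold nZero; field_simp
  generalize Real.sqrt (ε ^ 2 * (t:ℝ) ^ 2 + v ^ 2 * (1 - ε ^ 2)) = s at *
  generalize nZero ε t v = n at *
  have hsv : s = (1 - ε ^ 2) * n - t * ε ^ 2 := by linarith
  have hεt : ε ^ 2 * t ≤ ε * t := by
    have : ε ^ 2 ≤ ε := by nlinarith
    gcongr
  have hpos : 0 < (1 - ε ^ 2) * n := by rw [hn]; have : 0 < ε * t := by positivity
                                        have : 0 < t * ε ^ 2 := by positivity
                                        linarith
  have hnpos : 0 < n := pos_of_mul_pos_right hpos hp.le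
  have key : ε ^ 2 * (n + t) ^ 2 = n ^ 2 - v ^ 2 := by
    have : (1 - ε ^ 2) * (ε ^ 2 * (n + t) ^ 2 - (n ^ 2 - v ^ 2)) = 0 := by
      rw [hsv] at hs; linear_combination -hs
    rcases mul_eq_zero.1 this with h | h <;> linarith
  refine ⟨?_, key, by linarith⟩
  have : 0 < ε ^ 2 * (n + t) ^ 2 := by positivity
  exact lt_of_pow_lt_pow_left₀ 2 hnpos.le (by linarith)

/-- `F` is maximized at `n₀`, and for `z ≥ 2n₀` it decays at least
linearly: `F(n₀ + z) ≤ F(n₀) − (log 2/4)·z`. -/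
theorem stmt_16 (ε : ℝ) (hε : ε ∈ Set.Ioc (0:ℝ) (1/10)) (t : ℕ) (ht : 1 ≤ t)
    (v : ℝ) (hv : 0 ≤ v) :
    (∀ n : ℝ, v < n → Ffun ε t v n ≤ Ffun ε t v (nZero ε t v)) ∧
    (∀ z : ℝ, 2 * nZero ε t v ≤ z →
      Ffun ε t v (nZero ε t v + z) ≤ Ffun ε t v (nZero ε t v) - Real.log 2 / 4 * z) := by
  obtain ⟨h0, h1⟩ := hε
  obtain ⟨hvn, key, hbig⟩ := nZero_spec ε h0 h1 t ht v hv
  have ht' : (1:ℝ) ≤ t := by exact_mod_cast ht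
  generalize nZero ε t v = m at *
  have hp : 0 < 1 - ε ^ 2 := by nlinarith
  have hd := Ffun_hasDerivAt ε h0 t ht v hv
  have hq : ∀ n : ℝ, (n ^ 2 - v ^ 2) - ε ^ 2 * (n + t) ^ 2
      = (n - m) * ((1 - ε ^ 2) * n + ((1 - ε ^ 2) * m - 2 * ε ^ 2 * t)) := by
    intro n; linear_combination -key
  have hpos1 : ∀ n : ℝ, v < n → 0 < ε ^ 2 * (n + t) ^ 2 := by
    intro n hn
    have : 0 < n + t := by linarith
    positivity
  have hpos2 : ∀ n : ℝ, v < n → 0 < n ^ 2 - v ^ 2 := by intro n hn; nlinarith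
  have hfac : ∀ n : ℝ, v < n → 0 ≤ (1 - ε ^ 2) * n + ((1 - ε ^ 2) * m - 2 * ε ^ 2 * t) := by
    intro n hn
    have : 0 ≤ (1 - ε ^ 2) * n := mul_nonneg hp.le (by linarith)
    linarith
  have anti : AntitoneOn (Ffun ε t v) (Set.Ici m) := by
    apply antitoneOn_of_deriv_nonpos (convex_Ici m)
    · intro n hn
      exact (hd n (lt_of_lt_of_le hvn hn)).continuousAt.continuousWithinAt
    · intro n hn
      rw [interior_Ici] at hn
      exact (hd n (hvn.trans hn)).differentiableAt.differentiableWithinAt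
    · intro n hn
      rw [interior_Ici] at hn
      have hn' : m < n := hn
      have hvn' := hvn.trans hn'
      rw [(hd n hvn').deriv]
      have := Real.log_le_log (hpos1 n hvn') (y := n ^ 2 - v ^ 2) (by
        have := mul_nonneg (sub_nonneg.2 hn'.le) (hfac n hvn')
        linarith [hq n])
      linarith
  have mono : MonotoneOn (Ffun ε t v) (Set.Ioc v m) := by
    apply monotoneOn_of_deriv_nonneg (convex_Ioc v m)
    · intro n hn
      exact (hd n hn.1).continuousAt.continuousWithinAt
    · intro n hn
      rw [interior_Ioc] at hn
      exact (hd n hn.1).differentiableAt.differentiableWithinAt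
    · intro n hn
      rw [interior_Ioc] at hn
      rw [(hd n hn.1).deriv]
      have := Real.log_le_log (hpos2 n hn.1) (y := ε ^ 2 * (n + t) ^ 2) (by
        have := mul_nonneg (sub_nonneg.2 hn.2.le) (hfac n hn.1)
        linarith [hq n])
      linarith
  have hm : 0 < m := by linarith
  have hd2 : ∀ n : ℝ, v < n → HasDerivAt (fun x => Ffun ε t v x + x * (Real.log 2 / 2))
      ((Real.log (ε ^ 2 * (n + t) ^ 2) - Real.log (n ^ 2 - v ^ 2)) / 2
        + 1 * (Real.log 2 / 2)) n :=
    fun n hn => (hd n hn).add ((hasDerivAt_id n).mul_const (Real.log 2 / 2))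
  have anti2 : AntitoneOn (fun x => Ffun ε t v x + x * (Real.log 2 / 2)) (Set.Ici (2 * m)) := by
    apply antitoneOn_of_deriv_nonpos (convex_Ici (2 * m))
    · intro n hn
      have hn' : 2 * m ≤ n := hn
      exact (hd2 n (by linarith)).continuousAt.continuousWithinAt
    · intro n hn
      rw [interior_Ici] at hn
      have hn' : 2 * m < n := hn
      exact (hd2 n (by linarith)).differentiableAt.differentiableWithinAt
    · intro n hn
      rw [interior_Ici] at hn
      have hn' : 2 * m < n := hn
      have hvn' : v < n := by linarith
      rw [(hd2 n hvn').deriv]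
      have hle : 2 * (ε ^ 2 * (n + t) ^ 2) ≤ n ^ 2 - v ^ 2 := by
        have ha : ε * (m + t) ≤ m := by
          refine abs_le_of_sq_le_sq' ?_ hm.le |>.2
          nlinarith
        have hb : ε * (n - m) ≤ (n - m) / 10 := by nlinarith
        have hc : 0 ≤ ε * (m + t) := by positivity
        have hdd : 0 ≤ ε * (n - m) := mul_nonneg h0.le (by linarith)
        have e1 : ε ^ 2 * (n + t) ^ 2
            = (n - m) * (ε * (n - m)) * 0 + (m ^ 2 - v ^ 2)
              + 2 * (ε * (m + t)) * (ε * (n - m)) + (ε * (n - m)) ^ 2 := by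
          linear_combination key
        have e2 : (ε * (m + t)) * (ε * (n - m)) ≤ m * ((n - m) / 10) :=
          mul_le_mul ha hb hdd hm.le
        have e3 : (ε * (n - m)) ^ 2 ≤ ((n - m) / 10) ^ 2 := by gcongr
        rw [e1]
        nlinarith [sq_nonneg v, mul_pos hm (sub_pos.2 hn'), sq_nonneg (n - 2 * m)]
      have := Real.log_le_log (mul_pos two_pos (hpos1 n hvn')) hle
      rw [Real.log_mul two_ne_zero (hpos1 n hvn').ne'] at this
      linarith
  constructor
  · intro n hn
    rcases le_total n m with h | h
    · exact mono ⟨hn, h⟩ ⟨hvn, le_refl m⟩ h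
    · exact anti (Set.mem_Ici.2 le_rfl) h h
  · intro z hz
    have a1 : Ffun ε t v (2 * m) ≤ Ffun ε t v m :=
      anti (Set.mem_Ici.2 le_rfl) (Set.mem_Ici.2 (by linarith)) (by linarith)
    have a2 := anti2 (Set.mem_Ici.2 (le_refl (2 * m)))
      (Set.mem_Ici.2 (show 2 * m ≤ m + z by linarith)) (show 2 * m ≤ m + z by linarith)
    simp only at a2
    have hl : 0 < Real.log 2 := Real.log_pos (by norm_num)
    nlinarith
end

section
/- There exists an absolute constant ε₀ ∈ (0,1) such that for every real ε ∈ (0, ε₀], every integer t ≥ 1, and every real v > 0 with v ≥ 10·ε·t, one has F(n₀) ≤ −v, where F and n₀ are as defined in the context. -/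
/-- For `ε` at most a small absolute constant, `t ≥ 1` and
`v ≥ 10·ε·t` with `v > 0`, one has `F(n₀) ≤ −v`. -/
theorem stmt_17 :
    ∃ ε₀ ∈ Set.Ioo (0:ℝ) 1, ∀ ε : ℝ, ε ∈ Set.Ioc (0:ℝ) ε₀ → ∀ t : ℕ, 1 ≤ t →
      ∀ v : ℝ, 0 < v → 10 * ε * t ≤ v → Ffun ε t v (nZero ε t v) ≤ -v := by
  refine ⟨1/100, by norm_num, ?_⟩
  rintro ε ⟨he0, he⟩ t ht v hv hvt
  have ht' : (1:ℝ) ≤ t := by exact_mod_cast ht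
  unfold Ffun
  have hd : 0 < 1 - ε ^ 2 := by nlinarith
  have hs0 := Real.sqrt_nonneg (ε ^ 2 * t ^ 2 + v ^ 2 * (1 - ε ^ 2))
  have hrad : 0 ≤ ε ^ 2 * t ^ 2 + v ^ 2 * (1 - ε ^ 2) := by positivity
  have hs2 := Real.sq_sqrt hrad
  have hn : nZero ε t v * (1 - ε ^ 2) =
      t * ε ^ 2 + Real.sqrt (ε ^ 2 * t ^ 2 + v ^ 2 * (1 - ε ^ 2)) := by
    unfold nZero
    field_simp
  generalize nZero ε t v = n at *
  generalize Real.sqrt (ε ^ 2 * t ^ 2 + v ^ 2 * (1 - ε ^ 2)) = s at *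
  generalize (t:ℝ) = T at *
  have hT : 0 < T := by linarith
  have hn0 : 0 < n := by
    have : 0 < n * (1 - ε ^ 2) := by rw [hn]; positivity
    exact pos_of_mul_pos_left this hd.le
  have heT : 0 < ε * T := by positivity
  have heT2 : (ε * T) ^ 2 ≤ (v / 10) ^ 2 := pow_le_pow_left₀ heT.le (by linarith) 2
  have hcrit : (n - v) * (n + v) = (ε * (n + T)) ^ 2 := by
    have h1 : s = n * (1 - ε ^ 2) - T * ε ^ 2 := by linarith
    rw [h1] at hs2
    have : (1 - ε ^ 2) * ((n - v) * (n + v)) = (1 - ε ^ 2) * (ε * (n + T)) ^ 2 := by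
      linear_combination hs2
    exact mul_left_cancel₀ hd.ne' this
  have hm : 0 < n + T := by linarith
  have hb : 0 < n + v := by linarith
  have ha : 0 < n - v := by
    have : 0 < (n - v) * (n + v) := by rw [hcrit]; positivity
    exact pos_of_mul_pos_left this hb.le
  have hs : s ≤ 1.01 * v := by
    refine abs_le_of_sq_le_sq' ?_ (by positivity) |>.2
    nlinarith [mul_nonneg (sq_nonneg v) (sq_nonneg ε)]
  have he2 : ε ^ 2 ≤ 1 / 10000 := by nlinarith
  have hn1 : n ≤ 1.1 * v := by
    have h1 : T * ε ^ 2 ≤ v / 1000 := by nlinarith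
    have h2 : n * ε ^ 2 ≤ n * (1 / 10000) := by gcongr
    nlinarith
  have hbig : 16 * (ε * (n + T)) ≤ n + v := by nlinarith
  have hl := congrArg Real.log hcrit
  rw [Real.log_mul ha.ne' hb.ne', Real.log_pow, Real.log_mul he0.ne' hm.ne'] at hl
  have hl2 := Real.log_le_log (by positivity) hbig
  rw [Real.log_mul (by norm_num) (by positivity), Real.log_mul he0.ne' hm.ne'] at hl2
  have h16 : Real.log 16 = 4 * Real.log 2 := by
    rw [show (16:ℝ) = 2 ^ 4 by norm_num, Real.log_pow]; norm_num
  have hlog2 := Real.log_two_gt_d9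
  have h3 : T * (Real.log (n + T) - Real.log T) ≤ n := by
    rw [← Real.log_div hm.ne' hT.ne']
    have := Real.log_le_sub_one_of_pos (div_pos hm hT)
    calc T * Real.log ((n + T) / T) ≤ T * ((n + T) / T - 1) := by gcongr
      _ = n := by field_simp; ring
  rw [Real.log_div ha.ne' (by norm_num), Real.log_div hb.ne' (by norm_num), one_div, Real.log_inv]
  have h4 : v * 2.1 ≤ v * (Real.log (n + v) - Real.log ε - Real.log (n + T)) := by
    apply mul_le_mul_of_nonneg_left _ hv.le
    linarith
  have h5 : Real.log (n - v) = 2 * Real.log ε + 2 * Real.log (n + T) - Real.log (n + v) := by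
    push_cast at hl; linarith
  rw [h5]
  linarith
end

section
/- There exists an absolute constant ε₀ ∈ (0,1) such that for every real ε ∈ (0, ε₀], every integer t ≥ 1, and every real v with 0 ≤ v ≤ 10·ε·t, one has F(n₀) ≤ 100·ε·t, where F and n₀ are as defined in the context. -/
theorem aux_log (c x : ℝ) (hc : 0 < c) (hx : 0 < x) :
    x * Real.log c - x * Real.log x ≤ c - x := by
  have h := Real.log_le_sub_one_of_pos (div_pos hc hx)
  rw [Real.log_div hc.ne' hx.ne'] at h
  have h2 := mul_le_mul_of_nonneg_left h hx.le
  have h3 : x * (c / x - 1) = c - x := by field_simp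
  linarith

theorem aux_F (ε : ℝ) (t : ℕ) (v n : ℝ) (hε : 0 < ε) (ht : (0:ℝ) < t) (hv : 0 ≤ v)
    (hn : v < n) : Ffun ε t v n ≤ ε * t + n ^ 2 / t := by
  unfold Ffun
  have hn0 : 0 < n := by linarith
  have hc : 0 < ε * t / 2 := by positivity
  have h1 := aux_log (ε * t / 2) ((n - v) / 2) hc (by linarith)
  have h2 := aux_log (ε * t / 2) ((n + v) / 2) hc (by linarith)
  have hl : Real.log (ε * t / 2) = Real.log ε + Real.log t - Real.log 2 := by
    rw [Real.log_div (by positivity) (by norm_num), Real.log_mul hε.ne' ht.ne']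
  have hi : Real.log (1 / ε) = - Real.log ε := by simp
  have h3 := Real.log_le_sub_one_of_pos (div_pos (add_pos hn0 ht) ht)
  rw [Real.log_div (by positivity) ht.ne'] at h3
  have h4 := mul_le_mul_of_nonneg_left h3 (add_pos hn0 ht).le
  have h5 : (n + t) * ((n + t) / t - 1) = n + n ^ 2 / t := by field_simp; ring
  rw [h5] at h4
  rw [hl] at h1 h2
  rw [hi]
  linarith

theorem stmt_18 :
    ∃ ε₀ ∈ Set.Ioo (0:ℝ) 1, ∀ ε : ℝ, ε ∈ Set.Ioc (0:ℝ) ε₀ → ∀ t : ℕ, 1 ≤ t →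
      ∀ v : ℝ, 0 ≤ v → v ≤ 10 * ε * t → Ffun ε t v (nZero ε t v) ≤ 100 * ε * t := by
  refine ⟨1 / 100, by norm_num, ?_⟩
  rintro ε ⟨hε, hε1⟩ t ht v hv hvt
  have ht : (0:ℝ) < t := by exact_mod_cast ht
  have he2 : ε ^ 2 ≤ 1 / 100 * ε := by nlinarith
  have hd : 0 < 1 - ε ^ 2 := by nlinarith
  have hp : 0 < ε * t := by positivity
  have hlow : v < nZero ε t v := by
    unfold nZero
    rw [lt_div_iff₀ hd]
    have : v * (1 - ε ^ 2) ≤ Real.sqrt (ε ^ 2 * t ^ 2 + v ^ 2 * (1 - ε ^ 2)) := by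
      apply Real.le_sqrt_of_sq_le
      have : 0 ≤ v ^ 2 * (1 - ε ^ 2) * ε ^ 2 := by positivity
      nlinarith [sq_nonneg (ε * t)]
    have : 0 < t * ε ^ 2 := by positivity
    linarith
  have hup : nZero ε t v ≤ 12 * (ε * t) := by
    unfold nZero
    rw [div_le_iff₀ hd]
    have : Real.sqrt (ε ^ 2 * t ^ 2 + v ^ 2 * (1 - ε ^ 2)) ≤ 11 * (ε * t) := by
      apply Real.sqrt_le_iff.2 ⟨by positivity, ?_⟩
      have h1 : v ^ 2 ≤ (10 * ε * t) ^ 2 := by gcongr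
      have h2 : 0 ≤ v ^ 2 * ε ^ 2 := by positivity
      nlinarith [sq_nonneg (ε * t)]
    have h1 : t * ε ^ 2 ≤ t * (1 / 100 * ε) := by gcongr
    have h2 : ε * t * ε ^ 2 ≤ ε * t * (1 / 100) := by
      apply mul_le_mul_of_nonneg_left _ hp.le
      nlinarith
    nlinarith
  have h := aux_F ε t v _ hε ht hv hlow
  have h6 : (nZero ε t v) ^ 2 / t ≤ 2 * (ε * t) := by
    rw [div_le_iff₀ ht]
    have h0 : 0 ≤ nZero ε t v := by linarith
    have h1 : (nZero ε t v) ^ 2 ≤ (12 * (ε * t)) ^ 2 := by gcongr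
    have h2 : ε ^ 2 * (t:ℝ) ^ 2 ≤ 1 / 100 * ε * (t:ℝ) ^ 2 := by gcongr
    have h3 : 0 < ε * (t:ℝ) ^ 2 := by positivity
    nlinarith
  linarith
end

section
/- There exists an absolute constant C > 0 such that for every real ε ∈ (0, 1/10], every integer t ≥ 1, and every integer v ≥ 0, one has c_{v,ε,t+1} ≤ C·(ε·t + v + 1)·exp(F(n₀)), where c is as defined in the context and F, n₀ are the function and point defined in the context with parameters ε, t, v. -/
lemma aux_choose (x y : ℝ) (hx : 0 ≤ x) (hy : 0 ≤ y) (i j : ℕ) :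
    ((i + j).choose i : ℝ) * x ^ i * y ^ j ≤ (x + y) ^ (i + j) := by
  rw [add_pow]
  have h := Finset.single_le_sum (s := Finset.range (i + j + 1))
    (f := fun m => x ^ m * y ^ (i + j - m) * ((i + j).choose m : ℝ))
    (fun m _ => by positivity) (a := i) (by simp)
  simp only [Nat.add_sub_cancel_left] at h
  linarith

lemma aux_w (t v a : ℕ) :
    ((v + 2 * a + t).choose (v + 2 * a) : ℝ) * ((v + 2 * a).choose a : ℝ)
      = ((v + 2 * a + t).factorial : ℝ) / (t.factorial * a.factorial * (a + v).factorial) := by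
  have h1 := Nat.choose_mul_factorial_mul_factorial (n := v + 2 * a + t) (k := v + 2 * a) (by omega)
  have h2 := Nat.choose_mul_factorial_mul_factorial (n := v + 2 * a) (k := a) (by omega)
  rw [show v + 2 * a + t - (v + 2 * a) = t by omega] at h1
  rw [show v + 2 * a - a = a + v by omega] at h2
  rw [eq_div_iff (by positivity)]
  have h1' : (((v + 2 * a + t).choose (v + 2 * a) : ℝ)) * ((v + 2 * a).factorial : ℝ) *
      (t.factorial : ℝ) = ((v + 2 * a + t).factorial : ℝ) := by exact_mod_cast h1
  have h2' : (((v + 2 * a).choose a : ℝ)) * (a.factorial : ℝ) *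
      ((a + v).factorial : ℝ) = ((v + 2 * a).factorial : ℝ) := by exact_mod_cast h2
  rw [← h1', ← h2']
  ring

lemma aux_sum (w : ℕ → ℝ) (E : ℝ) (A : ℕ) (h0 : ∀ a, 0 ≤ w a) (hE : ∀ a, w a ≤ E)
    (hr : ∀ a, A ≤ a → w (a + 1) ≤ 1 / 2 * w a) : ∑' a, w a ≤ (A + 2) * E := by
  have hg : ∀ k, w (k + A) ≤ E * (1 / 2) ^ k := by
    intro k
    induction k with
    | zero => simpa using hE A
    | succ k ih =>
      have := hr (k + A) (by omega)
      rw [show k + 1 + A = k + A + 1 by ring, pow_succ]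
      linarith
  have hs2 : Summable (fun k : ℕ => E * (1 / 2 : ℝ) ^ k) := summable_geometric_two.mul_left E
  have hs1 : Summable (fun k => w (k + A)) :=
    Summable.of_nonneg_of_le (fun k => h0 _) hg hs2
  have hs : Summable w := (summable_nat_add_iff A).1 hs1
  rw [← hs.sum_add_tsum_nat_add A]
  have h1 : ∑ i ∈ Finset.range A, w i ≤ A * E := by
    have := Finset.sum_le_card_nsmul (Finset.range A) w E (fun i _ => hE i)
    simpa using this
  have h2 : ∑' k, w (k + A) ≤ E * 2 := by
    rw [← tsum_geometric_two, ← tsum_mul_left]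
    exact hs1.tsum_le_tsum hg hs2
  linarith

lemma aux_cheb (ε : ℝ) (t v : ℕ) :
    chebCoeff ε (t + 1) v = 2 * ∑' a : ℕ, (ε / 2) ^ (v + 2 * a) *
      (((v + 2 * a + t).choose (v + 2 * a) : ℝ) * ((v + 2 * a).choose a : ℝ)) := by
  unfold chebCoeff
  congr 1
  have hinj : Function.Injective (fun a : ℕ => v + 2 * a) := by
    intro a b h
    simp only at h
    omega
  rw [← hinj.tsum_eq]
  · apply tsum_congr
    intro a
    rw [if_pos ⟨by omega, by rw [Nat.add_sub_cancel_left]; exact even_two_mul a⟩]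
    rw [show (v + 2 * a - v) / 2 = a by omega, ← mul_pow, ← div_eq_mul_inv, mul_assoc]
    congr 3
    rcases Nat.eq_zero_or_pos (v + 2 * a) with h | h
    · rw [h]; simp
    · congr 1; omega
  · intro n hn
    simp only [Function.mem_support] at hn
    by_cases h : v ≤ n ∧ Even (n - v)
    · obtain ⟨h1, k, hk⟩ := h
      exact ⟨k, by simp only; omega⟩
    · rw [if_neg h] at hn
      exact absurd rfl hn

lemma aux_n0 (ε : ℝ) (he : 0 < ε) (he' : ε ≤ 1 / 10) (t : ℕ) (ht : 1 ≤ t) (v : ℕ) :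
    (v : ℝ) < nZero ε t v ∧
      ε ^ 2 * (nZero ε t v + t) ^ 2 = nZero ε t v ^ 2 - (v : ℝ) ^ 2 := by
  have ht' : (1 : ℝ) ≤ t := by exact_mod_cast ht
  have hv : (0 : ℝ) ≤ v := by positivity
  have hd : 0 < 1 - ε ^ 2 := by nlinarith
  have hR : 0 ≤ ε ^ 2 * (t : ℝ) ^ 2 + (v : ℝ) ^ 2 * (1 - ε ^ 2) := by positivity
  set D := Real.sqrt (ε ^ 2 * (t : ℝ) ^ 2 + (v : ℝ) ^ 2 * (1 - ε ^ 2)) with hD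
  have hsq : D ^ 2 = ε ^ 2 * (t : ℝ) ^ 2 + (v : ℝ) ^ 2 * (1 - ε ^ 2) := Real.sq_sqrt hR
  have hn : nZero ε t v * (1 - ε ^ 2) = t * ε ^ 2 + D := by
    unfold nZero
    rw [div_mul_cancel₀ _ hd.ne']
  have hDv : (v : ℝ) * (1 - ε ^ 2) ≤ D := by
    apply Real.le_sqrt_of_sq_le
    have : (v : ℝ) ^ 2 * (1 - ε ^ 2) * (1 - ε ^ 2) ≤ (v : ℝ) ^ 2 * (1 - ε ^ 2) * 1 := by
      apply mul_le_mul_of_nonneg_left _ (by positivity)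
      nlinarith
    nlinarith [sq_nonneg (ε * t)]
  constructor
  · have : 0 < (t : ℝ) * ε ^ 2 := by positivity
    by_contra! hc
    nlinarith
  · have h1 : (nZero ε t v * (1 - ε ^ 2) - t * ε ^ 2) ^ 2
        = ε ^ 2 * (t : ℝ) ^ 2 + (v : ℝ) ^ 2 * (1 - ε ^ 2) := by
      rw [hn, ← hsq]; ring
    apply mul_left_cancel₀ hd.ne'
    linear_combination -h1

lemma aux_exp_s19 (ε : ℝ) (he : 0 < ε) (t : ℕ) (ht : 1 ≤ t) (v : ℕ) (n : ℝ) (hvn : (v : ℝ) < n)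
    (hn : ε ^ 2 * (n + t) ^ 2 = n ^ 2 - (v : ℝ) ^ 2) :
    Real.exp (Ffun ε t v n) =
      (ε / 2 * (n + t)) ^ v / ((n + v) / 2) ^ v * ((n + t) ^ t / (t : ℝ) ^ t) := by
  have ht' : (1 : ℝ) ≤ t := by exact_mod_cast ht
  have hv : (0 : ℝ) ≤ v := by positivity
  have hnt : 0 < n + t := by linarith
  have ha : 0 < (n - v) / 2 := by linarith
  have hb : 0 < (n + v) / 2 := by linarith
  have hs : Real.log ((n - v) / 2) + Real.log ((n + v) / 2)
      = 2 * (Real.log ε - Real.log 2 + Real.log (n + t)) := by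
    rw [← Real.log_mul ha.ne' hb.ne', ← Real.log_div he.ne' (by norm_num),
      ← Real.log_mul (by positivity) hnt.ne',
      show (2 : ℝ) * Real.log (ε / 2 * (n + t)) = ((2 : ℕ) : ℝ) * Real.log (ε / 2 * (n + t)) by simp,
      ← Real.log_pow]
    congr 1
    linear_combination -hn / 4
  rw [← Real.exp_log (show 0 < (ε / 2 * (n + t)) ^ v / ((n + v) / 2) ^ v *
    ((n + t) ^ t / (t : ℝ) ^ t) by positivity)]
  congr 1
  rw [Real.log_mul (by positivity) (by positivity), Real.log_div (by positivity) (by positivity),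
    Real.log_div (by positivity) (by positivity), Real.log_pow, Real.log_pow, Real.log_pow,
    Real.log_pow, Real.log_mul (by positivity) (by positivity),
    Real.log_div (by positivity) (by positivity)]
  unfold Ffun
  rw [one_div, Real.log_inv]
  linear_combination (-(n - v) / 2) * hs

lemma aux_term (ε : ℝ) (he : 0 < ε) (t : ℕ) (ht : 1 ≤ t) (v : ℕ) (n : ℝ) (hvn : (v : ℝ) < n)
    (hn : ε ^ 2 * (n + t) ^ 2 = n ^ 2 - (v : ℝ) ^ 2) (a : ℕ) :
    (ε / 2) ^ (v + 2 * a) *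
      (((v + 2 * a + t).choose (v + 2 * a) : ℝ) * ((v + 2 * a).choose a : ℝ)) ≤
      (ε / 2 * (n + t)) ^ v / ((n + v) / 2) ^ v * ((n + t) ^ t / (t : ℝ) ^ t) := by
  have ht' : (1 : ℝ) ≤ t := by exact_mod_cast ht
  have ht0 : (0 : ℝ) < t := by linarith
  have hv : (0 : ℝ) ≤ v := by positivity
  have hn0 : 0 < n := by linarith
  have hnt : 0 < n + t := by linarith
  have ha : 0 < (n - v) / 2 := by linarith
  have hb : 0 < (n + v) / 2 := by linarith
  have h1 := aux_choose n t hn0.le ht0.le (v + 2 * a) t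
  have h2 := aux_choose ((n - v) / 2) ((n + v) / 2) ha.le hb.le a (a + v)
  rw [show (n - v) / 2 + (n + v) / 2 = n by ring, show a + (a + v) = v + 2 * a by ring] at h2
  set p := (n - v) / 2 with hp
  set q := (n + v) / 2 with hq
  have hs : (ε / 2 * (n + t)) ^ 2 = p * q := by
    rw [hp, hq]; linear_combination hn / 4
  set c1 := ((v + 2 * a + t).choose (v + 2 * a) : ℝ)
  set c2 := ((v + 2 * a).choose a : ℝ)
  have hc1 : 0 ≤ c1 := by positivity
  have h3 : c1 * c2 * (p ^ a * q ^ (a + v) * (t : ℝ) ^ t) ≤ (n + t) ^ (v + 2 * a + t) :=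
    calc c1 * c2 * (p ^ a * q ^ (a + v) * (t : ℝ) ^ t)
        = c1 * (c2 * p ^ a * q ^ (a + v)) * (t : ℝ) ^ t := by ring
      _ ≤ c1 * n ^ (v + 2 * a) * (t : ℝ) ^ t := by gcongr
      _ ≤ _ := h1
  rw [div_mul_div_comm, le_div_iff₀ (by positivity)]
  have hpq : 0 < p ^ a * q ^ a := by positivity
  refine le_of_mul_le_mul_right ?_ hpq
  calc (ε / 2) ^ (v + 2 * a) * (c1 * c2) * (q ^ v * (t : ℝ) ^ t) * (p ^ a * q ^ a)
      = (ε / 2) ^ (v + 2 * a) * (c1 * c2 * (p ^ a * q ^ (a + v) * (t : ℝ) ^ t)) := by ring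
    _ ≤ (ε / 2) ^ (v + 2 * a) * (n + t) ^ (v + 2 * a + t) := by gcongr
    _ = (ε / 2 * (n + t)) ^ v * (n + t) ^ t * ((ε / 2 * (n + t)) ^ 2) ^ a := by
        rw [← pow_mul, mul_pow, mul_pow, pow_add, pow_add, pow_add]; ring
    _ = _ := by rw [hs, mul_pow p q a]

lemma aux_ratio (ε : ℝ) (he : 0 < ε) (he' : ε ≤ 1 / 10) (t v a : ℕ)
    (ha : 5 * ε * t + v ≤ (a : ℝ)) :
    (ε / 2) ^ (v + 2 * (a + 1)) * (((v + 2 * (a + 1) + t).choose (v + 2 * (a + 1)) : ℝ) *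
        ((v + 2 * (a + 1)).choose (a + 1) : ℝ)) ≤
      1 / 2 * ((ε / 2) ^ (v + 2 * a) *
      (((v + 2 * a + t).choose (v + 2 * a) : ℝ) * ((v + 2 * a).choose a : ℝ))) := by
  rw [aux_w, aux_w]
  rw [show v + 2 * (a + 1) + t = (v + 2 * a + t) + 1 + 1 by ring,
    show a + 1 + v = (a + v) + 1 by ring, show v + 2 * (a + 1) = v + 2 * a + 2 by ring, pow_add]
  simp only [Nat.factorial_succ]
  push_cast
  have ht : (0 : ℝ) ≤ t := by positivity
  have hv : (0 : ℝ) ≤ v := by positivity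
  have ha0 : (0 : ℝ) ≤ a := by positivity
  have key : (ε / 2) ^ 2 * ((v + 2 * a + t + 1 + 1) * (v + 2 * a + t + 1))
      ≤ 1 / 2 * (((a : ℝ) + 1) * (a + v + 1)) := by
    have h1 : ε / 2 * ((v : ℝ) + 2 * a + t + 1 + 1) ≤ 1 / 2 * ((a : ℝ) + 1) := by
      nlinarith [mul_nonneg (sub_nonneg.2 he') hv, mul_nonneg (sub_nonneg.2 he') ha0]
    have h2 : ε / 2 * ((v : ℝ) + 2 * a + t + 1) ≤ (a + v + 1 : ℝ) := by
      linarith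
    calc _ = (ε / 2 * ((v : ℝ) + 2 * a + t + 1 + 1)) * (ε / 2 * ((v : ℝ) + 2 * a + t + 1)) := by ring
      _ ≤ (1 / 2 * ((a : ℝ) + 1)) * (a + v + 1 : ℝ) := by gcongr
      _ = _ := by ring
  set K := (ε / 2) ^ (v + 2 * a) * (((v + 2 * a + t).factorial : ℝ) /
    (t.factorial * a.factorial * (a + v).factorial)) with hK
  have hK0 : 0 ≤ K := by positivity
  calc _ = K * (((ε / 2) ^ 2 * ((v + 2 * a + t + 1 + 1) * (v + 2 * a + t + 1))) /
        (((a : ℝ) + 1) * (a + v + 1))) := by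
        rw [hK]; field_simp
    _ ≤ K * (1 / 2) := by
        refine mul_le_mul_of_nonneg_left ?_ hK0
        rw [div_le_iff₀ (by positivity)]
        exact key
    _ = _ := by ring

/-- `c_{v,ε,t+1} ≤ C·(ε·t + v + 1)·exp(F(n₀))`, where `F` and `n₀` are
taken with parameters `ε`, `t`, `v`. -/
theorem stmt_19 :
    ∃ C : ℝ, 0 < C ∧
      ∀ ε : ℝ, ε ∈ Set.Ioc (0:ℝ) (1/10) → ∀ t : ℕ, 1 ≤ t → ∀ v : ℕ,
        chebCoeff ε (t + 1) v ≤
          C * (ε * t + v + 1) * Real.exp (Ffun ε t v (nZero ε t v)) := by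
  refine ⟨10, by norm_num, ?_⟩
  rintro ε ⟨he, he'⟩ t ht v
  obtain ⟨h1, h2⟩ := aux_n0 ε he he' t ht v
  rw [aux_cheb, aux_exp_s19 ε he t ht v _ h1 h2]
  have hv : (0 : ℝ) ≤ v := by positivity
  have hn : 0 < nZero ε t v := by linarith
  have hS := aux_sum _ _ ⌈5 * ε * t + v⌉₊ (fun a => by positivity)
    (aux_term ε he t ht v _ h1 h2)
    (fun a ha => aux_ratio ε he he' t v a (Nat.ceil_le.1 ha))
  have hA := (Nat.ceil_lt_add_one (show 0 ≤ 5 * ε * (t : ℝ) + v by positivity)).le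
  set E := (ε / 2 * (nZero ε t v + t)) ^ v / ((nZero ε t v + v) / 2) ^ v *
    ((nZero ε t v + t) ^ t / (t : ℝ) ^ t) with hE
  have hE0 : 0 ≤ E := by positivity
  have : 2 * ((⌈5 * ε * (t : ℝ) + v⌉₊ : ℝ) + 2) ≤ 10 * (ε * t + v + 1) := by linarith
  have := mul_le_mul_of_nonneg_right this hE0
  linarith
end
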